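/- arXiv:math/9902059 — 2 statements merged into one kernel-verified Lean document; each statement's English description precedes it below -/
import Mathlib

section
/- Let n ≥ 1 and let λ, μ ∈ ℝⁿ be weakly decreasing n-tuples. Then the set { ν ∈ ℝⁿ : ν is weakly decreasing and there exist real symmetric n×n matrices A, B with spec(A) = λ, spec(B) = μ and spec(A+B) = ν } is a convex subset of ℝⁿ. -/
/-!
# Convexity of the spectra of sums of symmetric matrices

After shifting by a large multiple `τ` of the identity, `A + B = C` becomes the symmetric equation
`∑ j, Q j diag(a j) Q jᵀ = ρ • 1` in three orthogonal matrices `Q j`, where `ρ = 3 * τ`, the `a j` are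
weakly decreasing and nonnegative, and `a` depends affinely on `ν` (`shiftedTriple`). Writing each
`diag(a j)` as a nonnegative combination, with weights `step (a j) k`, of the projections to the
first `k + 1` coordinates turns this into an equation about flags in `ℝⁿ`. The theorem follows from
three facts about *semistability* of tuples of flags (`Semistable`), the condition that the
weighted dimensions of the intersections with any subspace `S` add up to at most `ρ * dim S`.

* Necessity: a solution `Q` has semistable column flags (`semistable_of_sum_eq`). One compresses
  the equation to `S` and takes traces.
* Genericity: semistability at one point of a line of tuples of matrices persists at all but
  finitely many points of the line (`Semistable.finite_setOf_not`). This is an interpolation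
  argument: many destabilizing subspaces along the line would produce a destabilizing subspace of
  the initial point.
* Sufficiency: if the column flags of invertible matrices `g j` are semistable and the traces match,
  the equation has a solution (`exists_sum_eq`). The function `energy` on positive definite matrices
  is bounded below by semistability (`energy_bddBelow`), while a gradient step decreases it in
  proportion to the squared norm of the defect in the equation (`energy_descent`). Hence the defect
  has infimum zero, and the infimum is attained since the orthogonal group is compact.

Given solutions `Q` for `ν` and `Q'` for `ν'`, a general point of the line through `Q` and `Q'` is
semistable for both systems of weights. Semistability is a system of linear inequalities in the
weights, so that this point is semistable for every convex combination, and sufficiency provides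
the matrices for the corresponding convex combination of `ν` and `ν'` (`exists_sum_eq_combo`).
-/

namespace HornConvex

open Module

/-! ### Semistability is generic along lines -/

section Genericity

variable {V : Type*} [AddCommGroup V] [Module ℝ V]

/-- Semistability of a weighted family of linear maps `L i : W i → V`: for every subspace `S` of `V`,
`∑ i, c i * dim (L i ⁻¹ S) ≤ ρ * dim S`. For injective `L i` the left side is
`∑ i, c i * dim (range (L i) ∩ S)`. -/
def Semistable {ι : Type*} [Fintype ι] {W : ι → Type*} [∀ i, AddCommGroup (W i)]
    [∀ i, Module ℝ (W i)] (L : ∀ i, W i →ₗ[ℝ] V) (c : ι → ℝ) (ρ : ℝ) : Prop :=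
  ∀ S : Submodule ℝ V, ∑ i, c i * (finrank ℝ (S.comap (L i)) : ℝ) ≤ ρ * (finrank ℝ S : ℝ)

/-- A tuple `f : Fin M → V` is read as the `V`-valued polynomial `∑ b, s ^ b • f b`. For a space `T`
of such polynomials, `tailSub T q` consists of those in `T` that are divisible by `s ^ q`. -/
def tailSub {M : ℕ} (T : Submodule ℝ (Fin M → V)) (q : ℕ) : Submodule ℝ (Fin M → V) :=
  T ⊓ ⨅ a : {a : Fin M // a.val < q}, LinearMap.ker (LinearMap.proj (R := ℝ) (φ := fun _ => V) a.1)

lemma mem_tailSub {M : ℕ} (T : Submodule ℝ (Fin M → V)) (q : ℕ) (f : Fin M → V) :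
    f ∈ tailSub T q ↔ f ∈ T ∧ ∀ a : Fin M, a.val < q → f a = 0 := by
  simp [tailSub]

/-- The space of coefficients of `s ^ b` of the polynomials in `T` that are divisible by `s ^ b`. -/
def lowCoeff {M : ℕ} (T : Submodule ℝ (Fin M → V)) (b : Fin M) : Submodule ℝ V :=
  (tailSub T b.val).map (LinearMap.proj b)

lemma mem_lowCoeff {M : ℕ} (T : Submodule ℝ (Fin M → V)) (b : Fin M) (v : V) :
    v ∈ lowCoeff T b ↔ ∃ f ∈ T, (∀ a, a < b → f a = 0) ∧ f b = v := by
  simp [lowCoeff, mem_tailSub, and_assoc]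

lemma finrank_eq_map_add {X Y : Type*} [AddCommGroup X] [Module ℝ X] [FiniteDimensional ℝ X]
    [AddCommGroup Y] [Module ℝ Y] (π : X →ₗ[ℝ] Y) (F : Submodule ℝ X) :
    finrank ℝ F = finrank ℝ (F.map π) + finrank ℝ (F ⊓ LinearMap.ker π : Submodule ℝ X) := by
  have h := LinearMap.finrank_range_add_finrank_ker (π.domRestrict F)
  rw [LinearMap.range_domRestrict, LinearMap.ker_domRestrict] at h
  rw [← h]
  congr 1
  have e : (LinearMap.ker π).comap F.subtype = (F ⊓ LinearMap.ker π).comap F.subtype := by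
    ext x; simp
  rw [e]
  exact (Submodule.comapSubtypeEquivOfLe inf_le_left).finrank_eq

/-- Evaluation at `s` of the `V`-valued polynomial with coefficients `f : Fin M → V`. -/
def evalAt {M : ℕ} (s : ℝ) : (Fin M → V) →ₗ[ℝ] V :=
  ∑ b : Fin M, (s ^ b.val) • LinearMap.proj b

lemma evalAt_apply {M : ℕ} (s : ℝ) (f : Fin M → V) : evalAt s f = ∑ b, s ^ b.val • f b := by
  simp [evalAt]

/-- A polynomial of degree less than `N` that vanishes at `N` distinct points is zero. -/
lemma evalAt_injective {N : ℕ} (s : Fin N → ℝ) (hs : Function.Injective s) (f : Fin N → V)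
    (h : ∀ j, evalAt (s j) f = 0) : f = 0 := by
  have hdet : (Matrix.vandermonde s).det ≠ 0 := Matrix.det_vandermonde_ne_zero_iff.2 hs
  have hu := Matrix.nonsing_inv_mul _ (isUnit_iff_ne_zero.2 hdet)
  funext a
  have h1 : ∑ j, (Matrix.vandermonde s)⁻¹ a j • evalAt (s j) f = 0 := by simp [h]
  simp only [evalAt_apply, Finset.smul_sum, smul_smul] at h1
  rw [Finset.sum_comm] at h1
  simp only [← Finset.sum_smul] at h1
  have h2 : ∀ b : Fin N, ∑ j, (Matrix.vandermonde s)⁻¹ a j * s j ^ b.val =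
      (1 : Matrix (Fin N) (Fin N) ℝ) a b := by
    intro b
    rw [← hu, Matrix.mul_apply]
    simp [Matrix.vandermonde_apply]
  simp only [h2, Matrix.one_apply] at h1
  simpa using h1

variable [FiniteDimensional ℝ V]

lemma finrank_eq_sum_lowCoeff {M : ℕ} (T : Submodule ℝ (Fin M → V)) :
    finrank ℝ T = ∑ b, finrank ℝ (lowCoeff T b) := by
  have key : ∀ Q : ℕ, Q ≤ M → finrank ℝ T =
      ∑ q ∈ Finset.range Q, (if h : q < M then finrank ℝ (lowCoeff T ⟨q, h⟩) else 0)
        + finrank ℝ (tailSub T Q) := by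
    intro Q
    induction Q with
    | zero =>
      intro _
      have : tailSub T 0 = T := by ext f; simp [mem_tailSub]
      rw [this]; simp
    | succ Q ih =>
      intro hQ
      have hQ' : Q < M := hQ
      rw [ih hQ'.le, Finset.sum_range_succ, dif_pos hQ', add_assoc]
      congr 1
      rw [finrank_eq_map_add (LinearMap.proj (R := ℝ) (φ := fun _ => V) (⟨Q, hQ'⟩ : Fin M))
        (tailSub T Q)]
      have : (tailSub T Q ⊓ LinearMap.ker (LinearMap.proj (R := ℝ) (φ := fun _ => V)
          (⟨Q, hQ'⟩ : Fin M))) = tailSub T (Q + 1) := by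
        ext f
        simp only [Submodule.mem_inf, mem_tailSub, LinearMap.mem_ker, LinearMap.proj_apply]
        constructor
        · rintro ⟨⟨h1, h2⟩, h3⟩
          refine ⟨h1, fun a ha => ?_⟩
          rcases Nat.lt_succ_iff_lt_or_eq.1 ha with h | h
          · exact h2 a h
          · have : a = ⟨Q, hQ'⟩ := Fin.ext h
            rw [this]; exact h3
        · rintro ⟨h1, h2⟩
          exact ⟨⟨h1, fun a ha => h2 a (Nat.lt_succ_of_lt ha)⟩, h2 _ (Nat.lt_succ_self Q)⟩
      rw [this]; rfl
  have h := key M le_rfl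
  have h0 : tailSub T M = ⊥ := by
    ext f
    simp only [mem_tailSub, Submodule.mem_bot]
    constructor
    · rintro ⟨_, h⟩; funext a; exact h a a.2
    · rintro rfl; simp
  rw [h0, finrank_bot, add_zero, ← Fin.sum_univ_eq_sum_range
    (fun q => if h : q < M then finrank ℝ (lowCoeff T ⟨q, h⟩) else 0)] at h
  rw [h]
  simp

/-- By Lagrange interpolation, values `K j ∋ v j` at `N` distinct points can be prescribed freely
for polynomials of degree less than `N`. -/
lemma sum_le_finrank_interp {N : ℕ} (s : Fin N → ℝ) (hs : Function.Injective s)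
    (K : Fin N → Submodule ℝ V) :
    ∑ j, finrank ℝ (K j) ≤ finrank ℝ (⨅ j, (K j).comap (evalAt (M := N) (s j)) :
      Submodule ℝ (Fin N → V)) := by
  let ev : (Fin N → V) →ₗ[ℝ] (Fin N → V) := LinearMap.pi fun j => evalAt (s j)
  have hev : Function.Injective ev := by
    rw [← LinearMap.ker_eq_bot, LinearMap.ker_eq_bot']
    intro f hf
    exact evalAt_injective s hs f fun j => congrFun hf j
  let e := LinearEquiv.ofInjectiveEndo ev hev
  let ι : (∀ j, K j) →ₗ[ℝ] (Fin N → V) :=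
    e.symm.toLinearMap ∘ₗ LinearMap.pi fun j => (K j).subtype ∘ₗ LinearMap.proj j
  have hι : ∀ x, ev (ι x) = fun j => (x j : V) := by
    intro x
    have := e.apply_symm_apply (fun j => (x j : V))
    exact this
  have hmem : ∀ x, ι x ∈ (⨅ j, (K j).comap (evalAt (M := N) (s j)) :
      Submodule ℝ (Fin N → V)) := by
    intro x
    simp only [Submodule.mem_iInf, Submodule.mem_comap]
    intro j
    have := congrFun (hι x) j
    change evalAt (s j) (ι x) = _ at this
    rw [this]; exact (x j).2
  have := LinearMap.finrank_le_finrank_of_injective (f := ι.codRestrict _ hmem) (by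
    intro x y hxy
    have h1 : ι x = ι y := congrArg Subtype.val hxy
    have h2 := congrArg ev h1
    rw [hι, hι] at h2
    funext j
    exact Subtype.ext (congrFun h2 j))
  rwa [Module.finrank_pi_fintype] at this

/-- A polynomial of degree at most `N` is determined by its values at `N` distinct points and its
coefficient of degree `N`. -/
lemma finrank_interp_le {N : ℕ} (s : Fin N → ℝ) (hs : Function.Injective s)
    (S : Fin N → Submodule ℝ V) :
    finrank ℝ (⨅ j, (S j).comap (evalAt (M := N + 1) (s j)) : Submodule ℝ (Fin (N + 1) → V))
      ≤ ∑ j, finrank ℝ (S j) + finrank ℝ V := by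
  set T := (⨅ j, (S j).comap (evalAt (M := N + 1) (s j)) : Submodule ℝ (Fin (N + 1) → V)) with hT
  have hmem : ∀ (j) (f : T), evalAt (s j) f.1 ∈ S j := by
    intro j f
    have := f.2
    simp only [hT, Submodule.mem_iInf, Submodule.mem_comap] at this
    exact this j
  let φ : T →ₗ[ℝ] (∀ j, S j) × V :=
    (LinearMap.pi fun j => ((evalAt (s j)) ∘ₗ T.subtype).codRestrict (S j) (hmem j)).prod
      (LinearMap.proj (Fin.last N) ∘ₗ T.subtype)
  have hφ : Function.Injective φ := by
    rw [← LinearMap.ker_eq_bot, LinearMap.ker_eq_bot']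
    intro f hf
    have h1 : ∀ j, evalAt (s j) f.1 = 0 := by
      intro j
      have := congrFun (congrArg Prod.fst hf) j
      exact congrArg Subtype.val this
    have h2 : f.1 (Fin.last N) = 0 := congrArg Prod.snd hf
    have h3 : (fun b : Fin N => f.1 b.castSucc) = 0 := by
      apply evalAt_injective s hs
      intro j
      have := h1 j
      rw [evalAt_apply, Fin.sum_univ_castSucc, h2] at this
      rw [evalAt_apply]
      simpa using this
    apply Subtype.ext
    funext b
    refine Fin.lastCases h2 (fun b => congrFun h3 b) b
  have := LinearMap.finrank_le_finrank_of_injective hφ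
  rwa [Module.finrank_prod, Module.finrank_pi_fintype] at this

/-- Semistability of `L` persists in the pencil `L + s • L'` for all but finitely many `s`.

Suppose it fails at `N` points `s j`, because of subspaces `S j`. The defects take finitely many
values, hence are at least some fixed `δ > 0`. Interpolate: `T` is the space of `V`-valued
polynomials of degree at most `N` whose value at each `s j` lies in `S j`, and `U i` is the
analogous space of `W i`-valued polynomials of degree less than `N`, for the preimages of the
`S j`. Multiplication by `L i + s • L' i` sends `U i` to `T` and acts on lowest-order coefficients
by `L i`, so semistability of `L` at the spaces of lowest-order coefficients of `T` bounds the
total defect, which is at least `N * δ`, by `ρ * dim V`. This fails for large `N`. -/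
theorem Semistable.finite_setOf_not {ι : Type*} [Fintype ι] {W : ι → Type*}
    [∀ i, AddCommGroup (W i)] [∀ i, Module ℝ (W i)] [∀ i, FiniteDimensional ℝ (W i)]
    (L L' : ∀ i, W i →ₗ[ℝ] V) (c : ι → ℝ) (hc : ∀ i, 0 ≤ c i) (ρ : ℝ) (hρ : 0 ≤ ρ)
    (h : Semistable L c ρ) :
    {s : ℝ | ¬ Semistable (fun i => L i + s • L' i) c ρ}.Finite := by
  -- `D` contains every possible value of the defect, and is finite.
  let D : Set ℝ := Set.range fun x : (∀ i, Fin (finrank ℝ (W i) + 1)) × Fin (finrank ℝ V + 1) =>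
    ∑ i, c i * ((x.1 i).val : ℝ) - ρ * (x.2.val : ℝ)
  have hD : D.Finite := Set.finite_range _
  obtain ⟨δ, hδ, hδD⟩ : ∃ δ > 0, ∀ x ∈ D, 0 < x → δ ≤ x := by
    have hfin : (D ∩ Set.Ioi 0).Finite := hD.subset Set.inter_subset_left
    by_cases hne : (D ∩ Set.Ioi 0).Nonempty
    · obtain ⟨m, hm, hmin⟩ := Set.exists_min_image _ id hfin hne
      exact ⟨m, hm.2, fun x hx hx0 => hmin x ⟨hx, hx0⟩⟩
    · exact ⟨1, one_pos, fun x hx hx0 => (hne ⟨x, hx, hx0⟩).elim⟩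
  by_contra hinf
  have hinf : {s : ℝ | ¬ Semistable (fun i => L i + s • L' i) c ρ}.Infinite := hinf
  obtain ⟨N, hN⟩ := exists_nat_gt (ρ * finrank ℝ V / δ)
  let e := hinf.natEmbedding
  let s : Fin N → ℝ := fun j => (e j.val).1
  have hs : Function.Injective s := by
    intro a b hab
    exact Fin.ext (e.injective (Subtype.ext hab))
  have hbad : ∀ j, ∃ S : Submodule ℝ V, ρ * (finrank ℝ S : ℝ) <
      ∑ i, c i * (finrank ℝ (S.comap (L i + s j • L' i)) : ℝ) := by
    intro j
    have : ¬ Semistable (fun i => L i + s j • L' i) c ρ := (e j.val).2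
    simpa only [Semistable, not_forall, not_le] using this
  choose S hS using hbad
  have hgap : ∀ j, ρ * (finrank ℝ (S j) : ℝ) + δ ≤
      ∑ i, c i * (finrank ℝ ((S j).comap (L i + s j • L' i)) : ℝ) := by
    intro j
    have := hδD (∑ i, c i * (finrank ℝ ((S j).comap (L i + s j • L' i)) : ℝ)
      - ρ * (finrank ℝ (S j) : ℝ))
      ⟨(fun i => ⟨finrank ℝ ((S j).comap (L i + s j • L' i)),
          Nat.lt_succ_of_le (Submodule.finrank_le _)⟩,
        ⟨finrank ℝ (S j), Nat.lt_succ_of_le (Submodule.finrank_le _)⟩), rfl⟩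
      (sub_pos.2 (hS j))
    linarith
  let T := (⨅ j, (S j).comap (evalAt (M := N + 1) (s j)) : Submodule ℝ (Fin (N + 1) → V))
  let U : ∀ i, Submodule ℝ (Fin N → W i) := fun i =>
    ⨅ j, ((S j).comap (L i + s j • L' i)).comap (evalAt (M := N) (s j))
  have hUT : ∀ i b, lowCoeff (U i) b ≤ (lowCoeff T b.castSucc).comap (L i) := by
    intro i b w hw
    rw [mem_lowCoeff] at hw
    obtain ⟨p, hp, hp0, rfl⟩ := hw
    rw [Submodule.mem_comap, mem_lowCoeff]
    -- The witness lists the coefficients of the polynomial `(L i + s • L' i) (p s)`.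
    refine ⟨(Fin.snoc (fun a => L i (p a)) 0 : Fin (N + 1) → V) +
      (Fin.cons 0 (fun a => L' i (p a)) : Fin (N + 1) → V), ?_, ?_, ?_⟩
    · simp only [T, U, Submodule.mem_iInf, Submodule.mem_comap] at hp ⊢
      intro j
      have := hp j
      convert this using 1
      rw [map_add, evalAt_apply, evalAt_apply, Fin.sum_univ_castSucc, Fin.sum_univ_succ]
      simp [evalAt_apply, pow_succ, mul_smul, map_sum, Finset.sum_add_distrib]
    · intro a ha
      have hab : a.val < b.val := ha
      have haN : a.val < N := hab.trans b.2
      have e1 : a = (⟨a.val, haN⟩ : Fin N).castSucc := rfl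
      have : (Fin.cons 0 (fun a => L' i (p a)) : Fin (N + 1) → V) a = 0 := by
        induction a using Fin.cases with
        | zero => rfl
        | succ a =>
          have : p a = 0 := hp0 a (Fin.lt_def.2 (by simp at hab; omega))
          simp [this]
      rw [Pi.add_apply, this, e1, Fin.snoc_castSucc, hp0 ⟨a.val, haN⟩ hab]
      simp
    · have : (Fin.cons 0 (fun a => L' i (p a)) : Fin (N + 1) → V) b.castSucc = 0 := by
        rcases b with ⟨b, hb⟩
        cases b with
        | zero => rfl
        | succ b =>
          have hpb : p ⟨b, by omega⟩ = 0 := hp0 _ (Fin.lt_def.2 (by simp))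
          change L' i (p ⟨b, by omega⟩) = 0
          rw [hpb, map_zero]
      rw [Pi.add_apply, this, Fin.snoc_castSucc, add_zero]
  have hU : ∀ i, (∑ j, (finrank ℝ ((S j).comap (L i + s j • L' i)) : ℝ)) ≤
      ∑ b : Fin N, (finrank ℝ ((lowCoeff T b.castSucc).comap (L i)) : ℝ) := by
    intro i
    have h1 := sum_le_finrank_interp s hs (fun j => (S j).comap (L i + s j • L' i))
    have h2 : finrank ℝ (U i) ≤ ∑ b : Fin N, finrank ℝ ((lowCoeff T b.castSucc).comap (L i)) := by
      rw [finrank_eq_sum_lowCoeff]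
      exact Finset.sum_le_sum fun b _ => Submodule.finrank_mono (hUT i b)
    exact_mod_cast h1.trans h2
  have hTsum : (∑ b : Fin N, (finrank ℝ (lowCoeff T b.castSucc) : ℝ)) ≤
      ∑ j, (finrank ℝ (S j) : ℝ) + finrank ℝ V := by
    have h1 := finrank_interp_le s hs S
    rw [finrank_eq_sum_lowCoeff, Fin.sum_univ_castSucc] at h1
    have h2 := (Nat.le_add_right _ _).trans h1
    exact_mod_cast h2
  have h1 : ∑ j, (ρ * (finrank ℝ (S j) : ℝ) + δ) ≤
      ρ * (∑ j, (finrank ℝ (S j) : ℝ) + finrank ℝ V) := by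
    calc ∑ j, (ρ * (finrank ℝ (S j) : ℝ) + δ)
        ≤ ∑ j, ∑ i, c i * (finrank ℝ ((S j).comap (L i + s j • L' i)) : ℝ) :=
          Finset.sum_le_sum fun j _ => hgap j
      _ = ∑ i, c i * ∑ j, (finrank ℝ ((S j).comap (L i + s j • L' i)) : ℝ) := by
          rw [Finset.sum_comm]; simp only [Finset.mul_sum]
      _ ≤ ∑ i, c i * ∑ b : Fin N, (finrank ℝ ((lowCoeff T b.castSucc).comap (L i)) : ℝ) :=
          Finset.sum_le_sum fun i _ => mul_le_mul_of_nonneg_left (hU i) (hc i)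
      _ = ∑ b : Fin N, ∑ i, c i * (finrank ℝ ((lowCoeff T b.castSucc).comap (L i)) : ℝ) := by
          rw [Finset.sum_comm]; simp only [Finset.mul_sum]
      _ ≤ ∑ b : Fin N, ρ * (finrank ℝ (lowCoeff T b.castSucc) : ℝ) :=
          Finset.sum_le_sum fun b _ => h _
      _ ≤ _ := by
          rw [← Finset.mul_sum]
          exact mul_le_mul_of_nonneg_left hTsum hρ
  rw [Finset.sum_add_distrib, ← Finset.mul_sum, mul_add] at h1
  simp at h1
  rw [div_lt_iff₀ hδ] at hN
  linarith

end Genericity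

open Matrix

/-! ### Symmetric matrices and `log det` -/

section Matrices

variable {m : Type*} [Fintype m] [DecidableEq m]

lemma charpoly_conj_diagonal (Q : Matrix m m ℝ) (hQ : Qᵀ * Q = 1) (d : m → ℝ) :
    (Q * diagonal d * Qᵀ).charpoly = ∏ i, (Polynomial.X - Polynomial.C (d i)) := by
  rw [mul_assoc, charpoly_mul_comm, mul_assoc, hQ, mul_one, charpoly_diagonal]

lemma exists_diagonalization (A : Matrix m m ℝ) (hA : A.IsSymm) :
    ∃ (Q : Matrix m m ℝ) (d : m → ℝ), Qᵀ * Q = 1 ∧ A = Q * diagonal d * Qᵀ := by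
  have hH : A.IsHermitian := by
    rw [IsHermitian, conjTranspose_eq_transpose_of_trivial]; exact hA
  refine ⟨(hH.eigenvectorUnitary : Matrix m m ℝ), hH.eigenvalues, ?_, ?_⟩
  · have := Unitary.coe_star_mul_self hH.eigenvectorUnitary
    rwa [star_eq_conjTranspose, conjTranspose_eq_transpose_of_trivial] at this
  · have := hH.spectral_theorem
    rw [Unitary.conjStarAlgAut_apply, star_eq_conjTranspose,
      conjTranspose_eq_transpose_of_trivial] at this
    exact this

lemma exists_sorted_diagonalization {n : ℕ} (A : Matrix (Fin n) (Fin n) ℝ) (hA : A.IsSymm) :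
    ∃ (Q : Matrix (Fin n) (Fin n) ℝ) (d : Fin n → ℝ), Qᵀ * Q = 1 ∧ Antitone d ∧
      A = Q * diagonal d * Qᵀ := by
  obtain ⟨Q, d, hQ, hd⟩ := exists_diagonalization A hA
  let σ := Tuple.sort (-d)
  have hσ : Monotone ((-d) ∘ σ) := Tuple.monotone_sort (-d)
  refine ⟨Q.submatrix id σ, d ∘ σ, ?_, ?_, ?_⟩
  · rw [transpose_submatrix, ← submatrix_mul _ _ _ id _ Function.bijective_id, hQ]
    exact submatrix_one_equiv σ
  · intro i j hij
    have := hσ hij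
    simp at this
    exact this
  · rw [hd]
    ext i j
    rw [mul_apply, mul_apply]
    simp only [mul_diagonal, transpose_apply, submatrix_apply, id, Function.comp]
    exact (Equiv.sum_comp σ fun x => Q i x * d x * Q j x).symm

lemma eq_of_antitone_of_prod_eq {n : ℕ} (d e : Fin n → ℝ) (hd : Antitone d) (he : Antitone e)
    (h : ∏ i, (Polynomial.X - Polynomial.C (d i)) = ∏ i, (Polynomial.X - Polynomial.C (e i))) :
    d = e := by
  have h1 := congrArg Polynomial.roots h
  have hr : ∀ f : Fin n → ℝ, (∏ i, (Polynomial.X - Polynomial.C (f i))).roots =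
      (List.ofFn f : Multiset ℝ) := by
    intro f
    rw [Polynomial.roots_prod _ _ (Finset.prod_ne_zero_iff.2 fun i _ => Polynomial.X_sub_C_ne_zero _)]
    simp [Polynomial.roots_X_sub_C, Multiset.bind_singleton, List.ofFn_eq_map]
  rw [hr, hr, Multiset.coe_eq_coe] at h1
  have hs : ∀ f : Fin n → ℝ, Antitone f → (List.ofFn f).SortedGE := fun f hf =>
    hf.sortedGE_ofFn
  exact List.ofFn_injective (List.Perm.eq_of_sortedGE (hs d hd) (hs e he) h1)

/-- The spectral theorem with a prescribed weakly decreasing spectrum, the latter encoded by the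
characteristic polynomial. -/
lemma exists_eq_conj_diagonal {n : ℕ} (A : Matrix (Fin n) (Fin n) ℝ) (hA : A.IsSymm)
    (a : Fin n → ℝ) (ha : Antitone a)
    (h : A.charpoly = ∏ i, (Polynomial.X - Polynomial.C (a i))) :
    ∃ Q : Matrix (Fin n) (Fin n) ℝ, Qᵀ * Q = 1 ∧ A = Q * diagonal a * Qᵀ := by
  obtain ⟨Q, d, hQ, hd, rfl⟩ := exists_sorted_diagonalization A hA
  rw [charpoly_conj_diagonal Q hQ] at h
  obtain rfl := eq_of_antitone_of_prod_eq d a hd ha h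
  exact ⟨Q, hQ, rfl⟩

lemma posDef_conj_diagonal_pos (Q : Matrix m m ℝ) (hQ : Qᵀ * Q = 1) (d : m → ℝ)
    (h : (Q * diagonal d * Qᵀ).PosDef) (i : m) : 0 < d i := by
  have hinj : Function.Injective Q.mulVec := by
    intro x y hxy
    have := congrArg (Qᵀ.mulVec) hxy
    simpa [mulVec_mulVec, hQ] using this
  have h1 := h.conjTranspose_mul_mul_same hinj
  rw [conjTranspose_eq_transpose_of_trivial] at h1
  have h2 : Qᵀ * (Q * diagonal d * Qᵀ) * Q = diagonal d := by
    rw [← mul_assoc, ← mul_assoc, hQ, one_mul, mul_assoc, hQ, mul_one]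
  rw [h2, posDef_diagonal_iff] at h1
  exact h1 i

lemma posDef_transpose_mul_mul (P h : Matrix m m ℝ) (hP : P.PosDef) (hh : IsUnit h.det) :
    (hᵀ * P * h).PosDef := by
  rw [← conjTranspose_eq_transpose_of_trivial]
  apply hP.conjTranspose_mul_mul_same
  exact mulVec_injective_of_isUnit ((isUnit_iff_isUnit_det _).2 hh)

lemma isSymm_of_posDef {m : Type*} {P : Matrix m m ℝ} (hP : P.PosDef) : P.IsSymm := by
  have := hP.isHermitian
  rwa [IsHermitian, conjTranspose_eq_transpose_of_trivial] at this

lemma exists_sqrt (P : Matrix m m ℝ) (hP : P.PosDef) :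
    ∃ h : Matrix m m ℝ, IsUnit h.det ∧ P = hᵀ * h := by
  obtain ⟨Q, d, hQ, hd⟩ := exists_diagonalization P (isSymm_of_posDef hP)
  have hpos := posDef_conj_diagonal_pos Q hQ d (hd ▸ hP)
  have hPe : P = (diagonal (fun i => √(d i)) * Qᵀ)ᵀ * (diagonal (fun i => √(d i)) * Qᵀ) := by
    rw [hd, transpose_mul, diagonal_transpose, transpose_transpose, mul_assoc, mul_assoc,
      ← mul_assoc (diagonal _) (diagonal _), diagonal_mul_diagonal]
    simp only [Real.mul_self_sqrt (hpos _).le]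
  refine ⟨_, ?_, hPe⟩
  have h1 : P.det ≠ 0 := hP.det_pos.ne'
  rw [hPe, det_mul, det_transpose] at h1
  exact isUnit_iff_ne_zero.2 (left_ne_zero_of_mul h1)

lemma log_det_le (P : Matrix m m ℝ) (hP : P.PosDef) :
    Real.log P.det ≤ P.trace - Fintype.card m := by
  obtain ⟨Q, d, hQ, hd⟩ := exists_diagonalization P (isSymm_of_posDef hP)
  have hpos := posDef_conj_diagonal_pos Q hQ d (hd ▸ hP)
  have hdet : P.det = ∏ i, d i := by
    rw [hd, mul_assoc, det_mul_comm, mul_assoc, hQ, mul_one, det_diagonal]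
  have htr : P.trace = ∑ i, d i := by
    rw [hd, mul_assoc, trace_mul_comm, mul_assoc, hQ, mul_one, trace_diagonal]
  rw [hdet, htr, Real.log_prod fun i _ => (hpos i).ne']
  have : ∑ i, d i - Fintype.card m = ∑ i, (d i - 1) := by simp [Finset.sum_sub_distrib]
  rw [this]
  exact Finset.sum_le_sum fun i _ => Real.log_le_sub_one_of_pos (hpos i)

lemma neg_log_one_sub_le {x : ℝ} (hx : |x| ≤ 1 / 2) : -Real.log (1 - x) ≤ x + 2 * x ^ 2 := by
  have h := Real.abs_log_sub_add_sum_range_le (x := x) (by linarith) 1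
  simp only [Finset.sum_range_one, zero_add, pow_one, Nat.cast_zero, div_one, one_add_one_eq_two,
    sq_abs] at h
  have h1 : x ^ 2 / (1 - |x|) ≤ 2 * x ^ 2 := by
    rw [div_le_iff₀ (by linarith)]
    nlinarith [sq_nonneg x]
  have h2 := (abs_le.1 (h.trans h1)).1
  linarith

/-- Second-order control of `log det` near the identity; the bound `B` on the Frobenius norm of `G`
keeps the eigenvalues of `t • G` in `[-1/2, 1/2]`. -/
lemma posDef_one_sub_smul_and_log_det (G : Matrix m m ℝ) (hG : G.IsSymm) (t B : ℝ) (ht : 0 ≤ t)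
    (hB : (G * G).trace ≤ B ^ 2) (hB0 : 0 ≤ B) (htB : t * B ≤ 1 / 2) :
    (1 - t • G).PosDef ∧
      -Real.log (1 - t • G).det ≤ t * G.trace + 2 * t ^ 2 * (G * G).trace := by
  obtain ⟨Q, d, hQ, hd⟩ := exists_diagonalization G hG
  have hQ' : Q * Qᵀ = 1 := mul_eq_one_comm.1 hQ
  have hGG : G * G = Q * diagonal (fun i => d i * d i) * Qᵀ := by
    rw [hd, ← diagonal_mul_diagonal]
    calc Q * diagonal d * Qᵀ * (Q * diagonal d * Qᵀ)
        = Q * diagonal d * (Qᵀ * Q) * diagonal d * Qᵀ := by simp only [mul_assoc]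
      _ = _ := by rw [hQ, mul_one]; simp only [mul_assoc]
  have htr : G.trace = ∑ i, d i := by
    rw [hd, mul_assoc, trace_mul_comm, mul_assoc, hQ, mul_one, trace_diagonal]
  have htr2 : (G * G).trace = ∑ i, d i * d i := by
    rw [hGG, mul_assoc, trace_mul_comm, mul_assoc, hQ, mul_one, trace_diagonal]
  have hone : 1 - t • G = Q * diagonal (fun i => 1 - t * d i) * Qᵀ := by
    have : (diagonal (fun i => 1 - t * d i) : Matrix m m ℝ) = 1 - t • diagonal d := by
      rw [← diagonal_one, ← diagonal_smul, ← diagonal_sub]; rfl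
    rw [this, mul_sub, mul_one, sub_mul, hQ', hd]
    simp
  have hdb : ∀ i, |d i| ≤ B := by
    intro i
    refine abs_le_of_sq_le_sq ?_ hB0
    have : d i * d i ≤ ∑ i, d i * d i :=
      Finset.single_le_sum (f := fun i => d i * d i) (fun i _ => mul_self_nonneg _) (Finset.mem_univ i)
    rw [htr2] at hB
    nlinarith
  have hsm : ∀ i, |t * d i| ≤ 1 / 2 := by
    intro i
    rw [abs_mul, abs_of_nonneg ht]
    exact (mul_le_mul_of_nonneg_left (hdb i) ht).trans htB
  have hpos : ∀ i, 0 < 1 - t * d i := by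
    intro i
    have := (abs_le.1 (hsm i)).2
    linarith
  constructor
  · have := posDef_transpose_mul_mul (diagonal (fun i => 1 - t * d i)) Qᵀ
      (posDef_diagonal_iff.2 hpos) (isUnit_det_of_left_inverse hQ')
    rw [transpose_transpose] at this
    rwa [hone]
  · have hdet : (1 - t • G).det = ∏ i, (1 - t * d i) := by
      rw [hone, mul_assoc, det_mul_comm, mul_assoc, hQ, mul_one, det_diagonal]
    rw [hdet, Real.log_prod fun i _ => (hpos i).ne', htr, htr2, ← Finset.sum_neg_distrib,
      Finset.mul_sum, Finset.mul_sum, ← Finset.sum_add_distrib]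
    refine Finset.sum_le_sum fun i _ => ?_
    have := neg_log_one_sub_le (hsm i)
    nlinarith

lemma one_le_det_one_add (Y : Matrix m m ℝ) (hY : Y.PosSemidef) : 1 ≤ (1 + Y).det := by
  have hs : Y.IsSymm := by
    have := hY.isHermitian
    rwa [IsHermitian, conjTranspose_eq_transpose_of_trivial] at this
  obtain ⟨Q, d, hQ, hd⟩ := exists_diagonalization Y hs
  have hQ' : Q * Qᵀ = 1 := mul_eq_one_comm.1 hQ
  have hpos : ∀ i, 0 ≤ d i := by
    have h1 := hY.conjTranspose_mul_mul_same Q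
    rw [conjTranspose_eq_transpose_of_trivial] at h1
    have h2 : Qᵀ * (Q * diagonal d * Qᵀ) * Q = diagonal d := by
      rw [← mul_assoc, ← mul_assoc, hQ, one_mul, mul_assoc, hQ, mul_one]
    rw [hd, h2, posSemidef_diagonal_iff] at h1
    exact h1
  have hone : 1 + Y = Q * diagonal (fun i => 1 + d i) * Qᵀ := by
    have : (diagonal (fun i => 1 + d i) : Matrix m m ℝ) = 1 + diagonal d := by
      rw [← diagonal_one, ← diagonal_add]
    rw [this, mul_add, mul_one, add_mul, hQ', hd]
  rw [hone, mul_assoc, det_mul_comm, mul_assoc, hQ, mul_one, det_diagonal]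
  calc (1 : ℝ) = ∏ _i : m, (1 : ℝ) := by simp
    _ ≤ _ := Finset.prod_le_prod (fun _ _ => zero_le_one) fun i _ => by linarith [hpos i]

/-- A consequence of the Cauchy–Binet formula: the Gram determinant dominates the square of each
maximal minor. It is proved from `Nᵀ * N = Bᵀ * B + Rᵀ * R`, where `B` consists of the chosen rows
and `R` of the remaining ones. -/
lemma sq_det_submatrix_le {n : Type*} [Fintype n] [DecidableEq n] (N : Matrix n m ℝ) (e : m → n)
    (hdet : (N.submatrix e id).det ≠ 0) :
    (N.submatrix e id).det ^ 2 ≤ (Nᵀ * N).det := by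
  set B := N.submatrix e id with hB
  have hu : IsUnit B.det := isUnit_iff_ne_zero.2 hdet
  have he : Function.Injective e := by
    intro x y hxy
    by_contra hne
    exact hdet (det_zero_of_row_eq hne (by ext z; simp [hB, hxy]))
  have hcl : ∀ f : n → ℝ, ∑ x, f x = ∑ x, f (e x) + ∑ x ∈ (Finset.univ.image e)ᶜ, f x := by
    intro f
    rw [← Finset.sum_add_sum_compl (Finset.univ.image e), Finset.sum_image fun x _ y _ h => he h]
  let R : Matrix n m ℝ := fun x y => if x ∈ Finset.univ.image e then 0 else N x y
  have hsum : Nᵀ * N = Bᵀ * B + Rᵀ * R := by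
    ext i j
    rw [Matrix.add_apply, mul_apply, mul_apply, mul_apply]
    simp only [transpose_apply]
    rw [hcl fun x => N x i * N x j]
    congr 1
    rw [← Finset.sum_add_sum_compl (Finset.univ.image e) fun x => R x i * R x j]
    rw [Finset.sum_eq_zero (s := Finset.univ.image e), zero_add]
    · refine Finset.sum_congr rfl fun x hx => ?_
      simp only [R, if_neg (Finset.mem_compl.1 hx)]
    · intro x hx; simp only [R, if_pos hx, zero_mul]
  have hfac : Nᵀ * N = Bᵀ * (1 + (R * B⁻¹)ᵀ * (R * B⁻¹)) * B := by
    rw [hsum, mul_add, add_mul, mul_one, transpose_mul]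
    congr 1
    calc Rᵀ * R = (B⁻¹ * B)ᵀ * Rᵀ * (R * (B⁻¹ * B)) := by rw [nonsing_inv_mul _ hu]; simp
      _ = _ := by rw [transpose_mul]; simp only [Matrix.mul_assoc]
  rw [hfac, det_mul, det_mul, det_transpose]
  have h1 : 1 ≤ (1 + (R * B⁻¹)ᵀ * (R * B⁻¹)).det := by
    apply one_le_det_one_add
    rw [← conjTranspose_eq_transpose_of_trivial]
    exact posSemidef_conjTranspose_mul_self _
  nlinarith [sq_nonneg B.det]

end Matrices

/-! ### The energy function is bounded below -/

section LowerBound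

/-- Summation by parts: if all partial sums of `w` are nonnegative and `α` is weakly decreasing,
then `∑ α r * w r` is at least a lower bound for `α` times the total sum of `w`. -/
lemma abel_le {n : ℕ} (α w : Fin n → ℝ) (hα : Antitone α)
    (hw : ∀ q : ℕ, q ≤ n → 0 ≤ ∑ r, if r.val < q then w r else 0) (β : ℝ) (hβ : ∀ r, β ≤ α r) :
    β * ∑ r, w r ≤ ∑ r, α r * w r := by
  induction n generalizing β with
  | zero => simp
  | succ n ih =>
    have h1 := ih (fun r => α r.castSucc) (fun r => w r.castSucc)
      (fun a b hab => hα (Fin.castSucc_le_castSucc_iff.2 hab)) (fun q hq => by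
        have := hw q (by omega)
        rw [Fin.sum_univ_castSucc] at this
        simpa [not_lt.2 hq] using this) (α (Fin.last n)) (fun r => hα (Fin.le_last _))
    have h2 : 0 ≤ ∑ r, w r := by
      have := hw (n + 1) le_rfl
      rwa [Finset.sum_congr rfl fun r _ => if_pos r.2] at this
    have h3 := mul_le_mul_of_nonneg_right (hβ (Fin.last n)) h2
    rw [Fin.sum_univ_castSucc (fun r => α r * w r)]
    rw [Fin.sum_univ_castSucc] at h3 ⊢
    linarith

/-- The subspace of vectors in `ℝⁿ` whose first `q` coordinates vanish. -/
def vanishing (n q : ℕ) : Submodule ℝ (Fin n → ℝ) where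
  carrier := {v | ∀ r : Fin n, r.val < q → v r = 0}
  add_mem' := fun {a b} ha hb r hr => by simp [ha r hr, hb r hr]
  zero_mem' := fun _ _ => rfl
  smul_mem' := fun c v hv r hr => by simp [hv r hr]

lemma finrank_comap_vanishing_le {n q : ℕ} (hq : q ≤ n) (Q : Matrix (Fin n) (Fin n) ℝ)
    (hQ : Qᵀ * Q = 1) :
    finrank ℝ ((vanishing n q).comap Qᵀ.mulVecLin) ≤ n - q := by
  let φ : (vanishing n q).comap Qᵀ.mulVecLin →ₗ[ℝ] ({r : Fin n // q ≤ r.val} → ℝ) :=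
    (LinearMap.pi fun r => LinearMap.proj r.1) ∘ₗ Qᵀ.mulVecLin ∘ₗ Submodule.subtype _
  have hφ : Function.Injective φ := by
    rw [← LinearMap.ker_eq_bot, LinearMap.ker_eq_bot']
    rintro ⟨v, hv⟩ h
    have h1 : Qᵀ *ᵥ v = 0 := by
      funext r
      by_cases hr : r.val < q
      · exact hv r hr
      · exact congrFun h ⟨r, not_lt.1 hr⟩
    have h2 : Q *ᵥ (Qᵀ *ᵥ v) = 0 := by rw [h1, mulVec_zero]
    rw [mulVec_mulVec, mul_eq_one_comm.1 hQ, one_mulVec] at h2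
    exact Subtype.ext h2
  have := LinearMap.finrank_le_finrank_of_injective hφ
  rw [Module.finrank_fintype_fun_eq_card] at this
  refine this.trans ?_
  rw [Fintype.card_subtype]
  have h1 : (Finset.univ.filter fun r : Fin n => q ≤ r.val).card +
      (Finset.univ.filter fun r : Fin n => ¬ q ≤ r.val).card = n := by
    rw [Finset.card_filter_add_card_filter_not]; simp
  have h2 : (Finset.univ.filter fun r : Fin n => ¬ q ≤ r.val).card = q := by
    simp only [not_le]
    rw [Fin.card_filter_val_lt]; omega
  omega

/-- Greedy choice of rows: keep a row if it does not lie in the span of the earlier ones. The kept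
rows form a basis of the row space, giving a nonzero maximal minor, and among the first `q` rows
the number of kept ones is the rank of these `q` rows, which is the codimension of the preimage of
`vanishing n q`. -/
lemma exists_greedy_rows {n : ℕ} {m : Type*} [Fintype m] [DecidableEq m]
    (N : Matrix (Fin n) m ℝ) (hN : Function.Injective N.mulVec) :
    ∃ e : m → Fin n, (N.submatrix e id).det ≠ 0 ∧ ∀ q : ℕ, Fintype.card m ≤
      (Finset.univ.filter fun x => (e x).val < q).card +
        finrank ℝ ((vanishing n q).comap N.mulVecLin) := by
  classical
  let I : Finset (Fin n) := Finset.univ.filter fun r =>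
    N r ∉ Submodule.span ℝ (N '' {r' | r' < r})
  -- `J q` indexes the kept rows among the first `q`.
  let J : ℕ → Finset (Fin n) := fun q => I.filter fun r => r.val < q
  have hspan : ∀ q : ℕ, ∀ r : Fin n, r.val < q → N r ∈ Submodule.span ℝ (N '' (J q : Set (Fin n))) := by
    intro q r
    induction r using WellFoundedLT.induction with
    | ind r ih =>
      intro hr
      by_cases hI : r ∈ I
      · exact Submodule.subset_span ⟨r, by simp [J, hI, hr], rfl⟩
      · have : N r ∈ Submodule.span ℝ (N '' {r' | r' < r}) := by
          simpa [I] using hI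
        refine Submodule.span_le.2 ?_ this
        rintro _ ⟨r', hr', rfl⟩
        exact ih r' hr' (lt_trans (Fin.lt_def.1 hr') hr)
  have hind : ∀ q : ℕ, LinearIndepOn ℝ N (J q : Set (Fin n)) := by
    intro q
    induction q with
    | zero =>
      have : (J 0 : Set (Fin n)) = ∅ := by simp [J]
      rw [this]; exact linearIndepOn_empty _ _
    | succ q ih =>
      by_cases hq : ∃ r ∈ I, r.val = q
      · obtain ⟨r, hrI, hrq⟩ := hq
        have hJ : (J (q + 1) : Set (Fin n)) = insert r (J q : Set (Fin n)) := by
          ext x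
          simp only [J, Finset.coe_filter, Set.mem_ofPred_eq, Set.mem_insert_iff]
          constructor
          · rintro ⟨h1, h2⟩
            rcases Nat.lt_succ_iff_lt_or_eq.1 h2 with h | h
            · exact Or.inr ⟨h1, h⟩
            · exact Or.inl (Fin.ext (h.trans hrq.symm))
          · rintro (rfl | ⟨h1, h2⟩)
            · exact ⟨hrI, by omega⟩
            · exact ⟨h1, by omega⟩
        rw [hJ]
        refine (linearIndepOn_insert (K := ℝ) (V := m → ℝ) (f := N) (by simp [J, hrq])).2
          ⟨ih, fun hmem => ?_⟩
        have h2 : N r ∉ Submodule.span ℝ (N '' {r' | r' < r}) := by simpa [I] using hrI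
        refine h2 (Submodule.span_mono (Set.image_mono ?_) hmem)
        intro x hx
        have : x.val < q := by simp [J] at hx; exact hx.2
        exact Fin.lt_def.2 (by omega)
      · have hJ : J (q + 1) = J q := by
          ext x
          simp only [J, Finset.mem_filter]
          constructor
          · rintro ⟨h1, h2⟩
            refine ⟨h1, ?_⟩
            rcases Nat.lt_succ_iff_lt_or_eq.1 h2 with h | h
            · exact h
            · exact (hq ⟨x, h1, h⟩).elim
          · rintro ⟨h1, h2⟩; exact ⟨h1, by omega⟩
        rw [hJ]; exact ih
  have hcard : ∀ q : ℕ, Fintype.card m ≤ (J q).card +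
      finrank ℝ ((vanishing n q).comap N.mulVecLin) := by
    intro q
    let φ : (m → ℝ) →ₗ[ℝ] (J q → ℝ) := (LinearMap.pi fun r => LinearMap.proj r.1) ∘ₗ N.mulVecLin
    have hker : LinearMap.ker φ ≤ (vanishing n q).comap N.mulVecLin := by
      intro y hy r hr
      let ψ : (m → ℝ) →ₗ[ℝ] ℝ :=
        { toFun := fun v => v ⬝ᵥ y
          map_add' := fun a b => add_dotProduct a b y
          map_smul' := fun c a => smul_dotProduct c a y }
      have : Submodule.span ℝ (N '' (J q : Set (Fin n))) ≤ LinearMap.ker ψ := by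
        rw [Submodule.span_le]
        rintro _ ⟨r', hr', rfl⟩
        exact congrFun (LinearMap.mem_ker.1 hy) ⟨r', hr'⟩
      exact this (hspan q r hr)
    have h1 := LinearMap.finrank_range_add_finrank_ker φ
    have h2 := Submodule.finrank_le (LinearMap.range φ)
    rw [Module.finrank_fintype_fun_eq_card, Fintype.card_coe] at h2
    rw [Module.finrank_fintype_fun_eq_card] at h1
    have h3 := Submodule.finrank_mono hker
    omega
  have hJn : J n = I := by ext x; simp [J]
  have hIcard : I.card = Fintype.card m := by
    apply le_antisymm
    · have := (hind n)
      rw [hJn] at this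
      have h2 := LinearIndependent.fintype_card_le_finrank this
      rw [Module.finrank_fintype_fun_eq_card] at h2
      simpa using h2
    · have h1 := hcard n
      have h0 : (vanishing n n).comap N.mulVecLin = ⊥ := by
        rw [Submodule.eq_bot_iff]
        intro y hy
        apply hN
        rw [mulVec_zero]
        funext r
        exact hy r r.2
      rw [h0, finrank_bot, hJn] at h1
      exact h1
  let e₀ : m ≃ I := Fintype.equivOfCardEq (by simp [hIcard])
  refine ⟨fun x => (e₀ x).1, ?_, ?_⟩
  · have h1 := hind n
    rw [hJn] at h1
    have h2 : LinearIndependent ℝ (N.submatrix (fun x => (e₀ x).1) id).row :=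
      LinearIndependent.comp h1 e₀ e₀.injective
    rw [linearIndependent_rows_iff_isUnit, isUnit_iff_isUnit_det] at h2
    exact h2.ne_zero
  · intro q
    refine (hcard q).trans (Nat.add_le_add_right ?_ _)
    have : J q ⊆ (Finset.univ.filter fun x => (e₀ x).1.val < q).image fun x => (e₀ x).1 := by
      intro r hr
      simp only [J, Finset.mem_filter] at hr
      exact Finset.mem_image.2 ⟨e₀.symm ⟨r, hr.1⟩, by simp [hr.2], by simp⟩
    exact (Finset.card_le_card this).trans Finset.card_image_le

lemma isCompact_orthogonal {m : Type*} [Fintype m] [DecidableEq m] :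
    IsCompact {Q : Matrix m m ℝ | Qᵀ * Q = 1} := by
  have hsub : {Q : Matrix m m ℝ | Qᵀ * Q = 1} ⊆
      Set.pi Set.univ fun _ => Set.pi Set.univ fun _ => Set.Icc (-1 : ℝ) 1 := by
    intro Q hQ i _ j _
    have h := congrFun (congrFun hQ j) j
    rw [mul_apply, one_apply_eq] at h
    have h1 : Q i j * Q i j ≤ ∑ x, Qᵀ j x * Q x j :=
      Finset.single_le_sum (f := fun x => Qᵀ j x * Q x j) (fun x _ => mul_self_nonneg _)
        (Finset.mem_univ i)
    rw [h] at h1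
    exact abs_le.1 (abs_le_one_iff_mul_self_le_one.2 h1)
  refine IsCompact.of_isClosed_subset ?_ ?_ hsub
  · exact isCompact_univ_pi fun _ => isCompact_univ_pi fun _ => isCompact_Icc
  · exact isClosed_eq (by fun_prop) continuous_const

/-- The function `∑ i, c i * log det (L iᵀ P L i) - ρ * log det P` on positive definite matrices
`P`. Its critical points correspond to solutions of the matrix equation `∑ c i F i F iᵀ = ρ • 1`,
where the columns of `F i` are orthonormal and span the image of `L i` under a square root of
`P`. -/
noncomputable def energy {n : ℕ} {ι : Type*} [Fintype ι] {m : ι → Type*} [∀ i, Fintype (m i)]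
    [∀ i, DecidableEq (m i)] (L : ∀ i, Matrix (Fin n) (m i) ℝ) (c : ι → ℝ) (ρ : ℝ)
    (P : Matrix (Fin n) (Fin n) ℝ) : ℝ :=
  ∑ i, c i * Real.log ((L i)ᵀ * P * L i).det - ρ * Real.log P.det

/-- Semistability makes the energy bounded below. Diagonalize `P = Q diag(p) Qᵀ` with `p` weakly
decreasing. Each `det (L iᵀ P L i)` dominates the squared maximal minor of `Qᵀ L i` on rows `e i`,
times the product of the corresponding `p r`. For the greedy rows, semistability at the subspaces
of vectors `v` such that `Qᵀ v` vanishes in the first `q` coordinates says that the exponents of the `p r` dominate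
`ρ` in partial sums, so that summation by parts bounds the sum of the `log (p r)` terms below by
`0`. By compactness of the orthogonal group the minors can be chosen bounded away from `0`. -/
theorem energy_bddBelow {n : ℕ} {ι : Type*} [Fintype ι] {m : ι → Type*} [∀ i, Fintype (m i)]
    [∀ i, DecidableEq (m i)] (L : ∀ i, Matrix (Fin n) (m i) ℝ)
    (hL : ∀ i, Function.Injective (L i).mulVec) (c : ι → ℝ) (hc : ∀ i, 0 ≤ c i) (ρ : ℝ)
    (hρ : 0 ≤ ρ) (hcard : ∑ i, c i * (Fintype.card (m i) : ℝ) = ρ * n)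
    (hss : Semistable (fun i => (L i).mulVecLin) c ρ) :
    ∃ C, ∀ P : Matrix (Fin n) (Fin n) ℝ, P.PosDef → C ≤ energy L c ρ P := by
  classical
  -- `Adm`: the row choices whose counting functions dominate `ρ * q`.
  -- `U k`: the matrices `Q` for which some admissible choice has all minors above `1 / (k + 1)`.
  let Adm : Set (∀ i, m i → Fin n) := {e | ∀ q : ℕ, q ≤ n →
    ρ * q ≤ ∑ i, c i * ((Finset.univ.filter fun x => (e i x).val < q).card : ℝ)}
  let U : ℕ → Set (Matrix (Fin n) (Fin n) ℝ) := fun k => ⋃ e ∈ Adm, ⋂ i,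
    {Q | 1 / ((k : ℝ) + 1) < |((Qᵀ * L i).submatrix (e i) id).det|}
  have hUo : ∀ k, IsOpen (U k) := by
    intro k
    refine isOpen_biUnion fun e _ => isOpen_iInter_of_finite fun i => ?_
    refine isOpen_lt continuous_const ?_
    refine continuous_abs.comp (Continuous.matrix_det ?_)
    exact Continuous.matrix_submatrix (by fun_prop) _ _
  have hUmono : Monotone U := by
    intro k l hkl Q hQ
    simp only [U, Set.mem_iUnion, Set.mem_iInter, Set.mem_ofPred_eq] at hQ ⊢
    obtain ⟨e, he, h⟩ := hQ
    refine ⟨e, he, fun i => lt_of_le_of_lt ?_ (h i)⟩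
    exact one_div_le_one_div_of_le (by positivity) (by exact_mod_cast Nat.succ_le_succ hkl)
  have hcover : {Q : Matrix (Fin n) (Fin n) ℝ | Qᵀ * Q = 1} ⊆ ⋃ k, U k := by
    intro Q hQ
    have hinj : ∀ i, Function.Injective (Qᵀ * L i).mulVec := by
      intro i x y hxy
      apply hL i
      have := congrArg Q.mulVec hxy
      simpa [mulVec_mulVec, ← Matrix.mul_assoc, mul_eq_one_comm.1 hQ] using this
    choose e he1 he2 using fun i => exists_greedy_rows (Qᵀ * L i) (hinj i)
    have hAdm : e ∈ Adm := by
      intro q hq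
      have h1 := hss ((vanishing n q).comap Qᵀ.mulVecLin)
      have h2 : (finrank ℝ ((vanishing n q).comap Qᵀ.mulVecLin) : ℝ) ≤ n - q := by
        have := finrank_comap_vanishing_le hq Q hQ
        rw [← Nat.cast_sub hq]
        exact_mod_cast this
      have h3 : ∑ i, c i * (Fintype.card (m i) : ℝ) ≤
          ∑ i, c i * ((Finset.univ.filter fun x => (e i x).val < q).card : ℝ) +
          ∑ i, c i * (finrank ℝ (((vanishing n q).comap Qᵀ.mulVecLin).comap
            (L i).mulVecLin) : ℝ) := by
        rw [← Finset.sum_add_distrib]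
        refine Finset.sum_le_sum fun i _ => ?_
        rw [← mul_add]
        refine mul_le_mul_of_nonneg_left ?_ (hc i)
        have := he2 i q
        rw [mulVecLin_mul, Submodule.comap_comp] at this
        exact_mod_cast this
      have h4 := mul_le_mul_of_nonneg_left h2 hρ
      linarith
    have hpos : ∀ i, ∃ k : ℕ, 1 / ((k : ℝ) + 1) < |((Qᵀ * L i).submatrix (e i) id).det| :=
      fun i => exists_nat_one_div_lt (abs_pos.2 (he1 i))
    choose k hk using hpos
    obtain ⟨k', hk'⟩ := Finset.exists_le (Finset.univ.image k)
    refine Set.mem_iUnion.2 ⟨k', ?_⟩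
    simp only [U, Set.mem_iUnion, Set.mem_iInter, Set.mem_ofPred_eq]
    refine ⟨e, hAdm, fun i => lt_of_le_of_lt ?_ (hk i)⟩
    refine one_div_le_one_div_of_le (by positivity) ?_
    have := hk' (k i) (by simp)
    exact_mod_cast Nat.succ_le_succ this
  obtain ⟨k, hk⟩ := isCompact_orthogonal.elim_directed_cover U hUo hcover
    hUmono.directed_le
  set κ : ℝ := 1 / ((k : ℝ) + 1) with hκ
  have hκ0 : 0 < κ := by positivity
  refine ⟨∑ i, c i * Real.log (κ ^ 2), fun P hP => ?_⟩
  obtain ⟨Q, p, hQ, hp, hPe⟩ := exists_sorted_diagonalization P (isSymm_of_posDef hP)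
  have hpos := posDef_conj_diagonal_pos Q hQ p (hPe ▸ hP)
  have hQU := hk hQ
  simp only [U, Set.mem_iUnion, Set.mem_iInter, Set.mem_ofPred_eq] at hQU
  obtain ⟨e, he, hdet⟩ := hQU
  have hdetP : Real.log P.det = ∑ r, Real.log (p r) := by
    rw [hPe, Matrix.mul_assoc, det_mul_comm, Matrix.mul_assoc, hQ, Matrix.mul_one, det_diagonal,
      Real.log_prod fun r _ => (hpos r).ne']
  have hterm : ∀ i, Real.log (κ ^ 2) + ∑ x, Real.log (p (e i x)) ≤
      Real.log ((L i)ᵀ * P * L i).det := by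
    intro i
    have hfac : (L i)ᵀ * P * L i = (diagonal (fun r => √(p r)) * (Qᵀ * L i))ᵀ *
        (diagonal (fun r => √(p r)) * (Qᵀ * L i)) := by
      have hD : diagonal p = diagonal (fun r => √(p r)) * diagonal (fun r => √(p r)) := by
        rw [diagonal_mul_diagonal]
        exact congrArg diagonal (funext fun r => (Real.mul_self_sqrt (hpos r).le).symm)
      rw [hPe, hD, transpose_mul, transpose_mul, diagonal_transpose, transpose_transpose]
      simp only [Matrix.mul_assoc]
    have hsub : (diagonal (fun r => √(p r)) * (Qᵀ * L i)).submatrix (e i) id =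
        diagonal (fun x => √(p (e i x))) * (Qᵀ * L i).submatrix (e i) id := by
      ext x y
      simp [diagonal_mul]
    have hd : ((diagonal (fun r => √(p r)) * (Qᵀ * L i)).submatrix (e i) id).det =
        (∏ x, √(p (e i x))) * ((Qᵀ * L i).submatrix (e i) id).det := by
      rw [hsub, det_mul, det_diagonal]
    have hprod : 0 < ∏ x, p (e i x) := Finset.prod_pos fun x _ => hpos _
    have hsq : (∏ x, √(p (e i x))) ^ 2 = ∏ x, p (e i x) := by
      rw [← Finset.prod_pow]
      exact Finset.prod_congr rfl fun x _ => Real.sq_sqrt (hpos _).le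
    have hne : ((Qᵀ * L i).submatrix (e i) id).det ≠ 0 := abs_pos.1 (hκ0.trans (hdet i))
    have h1 := sq_det_submatrix_le (diagonal (fun r => √(p r)) * (Qᵀ * L i)) (e i) (by
      rw [hd]
      refine mul_ne_zero (Finset.prod_ne_zero_iff.2 fun x _ => ?_) hne
      exact (Real.sqrt_pos.2 (hpos _)).ne')
    rw [← hfac, hd, mul_pow, hsq] at h1
    have h2 : κ ^ 2 ≤ ((Qᵀ * L i).submatrix (e i) id).det ^ 2 := by
      rw [← sq_abs ((Qᵀ * L i).submatrix (e i) id).det]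
      exact pow_le_pow_left₀ hκ0.le (hdet i).le 2
    rw [← Real.log_prod fun x _ => (hpos _).ne', ← Real.log_mul (by positivity) hprod.ne']
    refine Real.log_le_log (by positivity) (le_trans ?_ h1)
    rw [mul_comm]
    exact mul_le_mul_of_nonneg_left h2 hprod.le
  -- `w r` is the total exponent of `p r` in the product of minors, minus `ρ`.
  let w : Fin n → ℝ := fun r => ∑ i, c i * ((Finset.univ.filter fun x => e i x = r).card : ℝ) - ρ
  have hwf : ∀ f : Fin n → ℝ, ∑ r, f r * w r = ∑ i, c i * ∑ x, f (e i x) - ρ * ∑ r, f r := by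
    intro f
    simp only [w, mul_sub, Finset.sum_sub_distrib, Finset.mul_sum]
    congr 1
    · rw [Finset.sum_comm]
      refine Finset.sum_congr rfl fun i _ => ?_
      rw [← Finset.sum_fiberwise (s := Finset.univ) (g := e i)]
      refine Finset.sum_congr rfl fun r _ => ?_
      rw [Finset.sum_congr rfl (g := fun _ => c i * f r)]
      · simp; ring
      · intro x hx; rw [(Finset.mem_filter.1 hx).2]
    · exact Finset.sum_congr rfl fun r _ => mul_comm _ _
  have hcount : ∀ q : ℕ, q ≤ n → ∑ r : Fin n, (if r.val < q then (1 : ℝ) else 0) = q := by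
    intro q hq
    rw [Finset.sum_boole, Fin.card_filter_val_lt, min_eq_right hq]
  have habel := abel_le (fun r => Real.log (p r)) w
    (fun a b hab => Real.log_le_log (hpos b) (hp hab)) (fun q hq => by
      have h1 := hwf fun r => if r.val < q then 1 else 0
      rw [hcount q hq] at h1
      have h2 := he q hq
      simp only [ite_mul, one_mul, zero_mul, Finset.sum_boole] at h1
      rw [h1]; linarith)
    (∑ r, -|Real.log (p r)|) (fun r => by
      have : -|Real.log (p r)| ≥ ∑ r, -|Real.log (p r)| := by
        rw [Finset.sum_neg_distrib]
        exact neg_le_neg (Finset.single_le_sum (f := fun r => |Real.log (p r)|)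
          (fun r _ => abs_nonneg _) (Finset.mem_univ r))
      linarith [neg_abs_le (Real.log (p r))])
  have hw0 : ∑ r, w r = 0 := by
    have h1 := hwf fun _ => 1
    simp only [one_mul] at h1
    rw [h1]
    simp [hcard]
  rw [hw0, mul_zero, hwf] at habel
  have hsum : ∑ i, c i * Real.log (κ ^ 2) + ∑ i, c i * ∑ x, Real.log (p (e i x)) ≤
      ∑ i, c i * Real.log ((L i)ᵀ * P * L i).det := by
    rw [← Finset.sum_add_distrib]
    refine Finset.sum_le_sum fun i _ => ?_
    rw [← mul_add]
    exact mul_le_mul_of_nonneg_left (hterm i) (hc i)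
  rw [energy, hdetP]
  linarith

end LowerBound

/-! ### Weights and column frames -/

section Frames

/-- The weight `step a k = a k - a (k + 1)`, with the convention `a n = 0`, so that
`a r = ∑ k ≥ r, step a k`. -/
noncomputable def step {n : ℕ} (a : Fin n → ℝ) (k : Fin n) : ℝ :=
  a k - if h : k.val + 1 < n then a ⟨k.val + 1, h⟩ else 0

lemma step_nonneg {n : ℕ} {a : Fin n → ℝ} (ha : Antitone a) (h0 : ∀ r, 0 ≤ a r) (k : Fin n) :
    0 ≤ step a k := by
  rw [step]
  split_ifs with h
  · exact sub_nonneg.2 (ha (Fin.le_def.2 (Nat.le_succ _)))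
  · simpa using h0 k

lemma step_combo {n : ℕ} (s t : ℝ) (a b : Fin n → ℝ) (k : Fin n) :
    step (fun r => s * a r + t * b r) k = s * step a k + t * step b k := by
  simp only [step]
  split_ifs <;> ring

lemma sum_step {n : ℕ} (a : Fin n → ℝ) (r : Fin n) :
    ∑ k, (if r ≤ k then step a k else 0) = a r := by
  let b : ℕ → ℝ := fun k => if h : k < n then a ⟨k, h⟩ else 0
  have h1 : ∀ k : Fin n, (if r ≤ k then step a k else 0) =
      b (max k.val r.val) - b (max (k.val + 1) r.val) := by
    intro k
    by_cases h : r ≤ k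
    · have h' : r.val ≤ k.val := h
      rw [if_pos h, max_eq_left h', max_eq_left (by omega)]
      simp [step, b]
    · have h' : k.val < r.val := not_le.1 h
      rw [if_neg h, max_eq_right (by omega), max_eq_right (by omega), sub_self]
  rw [Finset.sum_congr rfl fun k _ => h1 k,
    Fin.sum_univ_eq_sum_range fun k => b (max k r.val) - b (max (k + 1) r.val),
    Finset.sum_range_sub' fun k => b (max k r.val)]
  simp [b]

/-- Summation by parts for the weights `step a k`. -/
lemma sum_step_mul {n : ℕ} (a f : Fin n → ℝ) :
    ∑ k, step a k * ∑ r : {r : Fin n // r ≤ k}, f r.1 = ∑ r, a r * f r := by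
  have h1 : ∀ k : Fin n, step a k * ∑ r : {r : Fin n // r ≤ k}, f r.1 =
      ∑ r, (if r ≤ k then step a k else 0) * f r := by
    intro k
    rw [← Finset.sum_subtype (Finset.univ.filter fun r => r ≤ k) (by simp) f, Finset.mul_sum,
      Finset.sum_filter]
    refine Finset.sum_congr rfl fun r _ => ?_
    split_ifs <;> simp
  rw [Finset.sum_congr rfl fun k _ => h1 k, Finset.sum_comm]
  refine Finset.sum_congr rfl fun r _ => ?_
  rw [← Finset.sum_mul, sum_step]

lemma sum_step_mul_card {n : ℕ} (a : Fin n → ℝ) :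
    ∑ k, step a k * (Fintype.card {r : Fin n // r ≤ k} : ℝ) = ∑ r, a r := by
  simpa using sum_step_mul a fun _ => 1

/-- The matrix of the first `k + 1` columns of `g`. -/
def frame {n : ℕ} (g : Matrix (Fin n) (Fin n) ℝ) (k : Fin n) :
    Matrix (Fin n) {r : Fin n // r ≤ k} ℝ :=
  g.submatrix id Subtype.val

lemma conj_diagonal_eq_sum {n : ℕ} (Q : Matrix (Fin n) (Fin n) ℝ) (a : Fin n → ℝ) :
    Q * diagonal a * Qᵀ = ∑ k, step a k • (frame Q k * (frame Q k)ᵀ) := by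
  ext x y
  have h : ∀ k, (step a k • (frame Q k * (frame Q k)ᵀ)) x y =
      step a k * ∑ r : {r : Fin n // r ≤ k}, Q x r.1 * Q y r.1 := fun k => rfl
  rw [Matrix.sum_apply, Finset.sum_congr rfl fun k _ => h k,
    sum_step_mul a fun r => Q x r * Q y r, mul_apply]
  refine Finset.sum_congr rfl fun r _ => ?_
  rw [mul_diagonal, transpose_apply]
  ring

lemma frame_orthonormal {n : ℕ} (Q : Matrix (Fin n) (Fin n) ℝ) (hQ : Qᵀ * Q = 1) (k : Fin n) :
    (frame Q k)ᵀ * frame Q k = 1 := by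
  ext x y
  have := congrFun (congrFun hQ x.1) y.1
  simp only [mul_apply, transpose_apply, one_apply] at this
  simp only [frame, mul_apply, transpose_apply, one_apply, submatrix_apply, id, this,
    Subtype.ext_iff]

lemma frame_mul {n : ℕ} (h g : Matrix (Fin n) (Fin n) ℝ) (k : Fin n) :
    frame (h * g) k = h * frame g k := by
  ext x y; simp [frame, mul_apply]

lemma frame_injective {n : ℕ} (g : Matrix (Fin n) (Fin n) ℝ) (hg : IsUnit g.det) (k : Fin n) :
    Function.Injective (frame g k).mulVec := by
  have h1 : g⁻¹ * frame g k = frame 1 k := by rw [← frame_mul, nonsing_inv_mul _ hg]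
  have h2 : (frame (1 : Matrix (Fin n) (Fin n) ℝ) k)ᵀ * frame 1 k = 1 :=
    frame_orthonormal 1 (by simp) k
  intro x y hxy
  have := congrArg (fun v => (frame (1 : Matrix (Fin n) (Fin n) ℝ) k)ᵀ *ᵥ (g⁻¹ *ᵥ v)) hxy
  simpa [mulVec_mulVec, h1, h2] using this

/-- Multiplication on the right by an upper triangular matrix only changes the basis of the span of
the first `k + 1` columns. -/
lemma frame_mul_upper {n : ℕ} (Q R : Matrix (Fin n) (Fin n) ℝ)
    (hR : ∀ r c, c < r → R r c = 0) (k : Fin n) :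
    frame (Q * R) k = frame Q k * R.submatrix Subtype.val Subtype.val := by
  ext x y
  have h : (frame Q k * R.submatrix Subtype.val Subtype.val : Matrix _ _ ℝ) x y =
      ∑ r : {r : Fin n // r ≤ k}, Q x r.1 * R r.1 y.1 := rfl
  rw [h, ← Finset.sum_subtype (Finset.univ.filter fun r => r ≤ k) (by simp)
    fun r => Q x r * R r y.1, Finset.sum_filter]
  refine Eq.trans (b := ∑ r, Q x r * R r y.1) rfl ?_
  refine Finset.sum_congr rfl fun r _ => ?_
  split_ifs with h
  · rfl
  · rw [hR r y.1 (lt_of_le_of_lt y.2 (not_le.1 h)), mul_zero]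

/-- QR decomposition, from the Gram–Schmidt process applied to the columns. -/
lemma exists_qr {n : ℕ} (g : Matrix (Fin n) (Fin n) ℝ) :
    ∃ Q R : Matrix (Fin n) (Fin n) ℝ, Qᵀ * Q = 1 ∧ g = Q * R ∧ ∀ r c, c < r → R r c = 0 := by
  let f : Fin n → EuclideanSpace ℝ (Fin n) := fun k => WithLp.toLp 2 fun x => g x k
  let b := InnerProductSpace.gramSchmidtOrthonormalBasis (𝕜 := ℝ) (by simp) f
  refine ⟨of fun x r => b r x, of fun r k => inner ℝ (b r) (f k), ?_, ?_, ?_⟩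
  · ext i j
    have := orthonormal_iff_ite.1 b.orthonormal i j
    rw [PiLp.inner_apply] at this
    simp only [mul_apply, transpose_apply, of_apply, one_apply, ← this]
    exact Finset.sum_congr rfl fun x _ => by simp [mul_comm]
  · ext x k
    have := congrArg (fun v : EuclideanSpace ℝ (Fin n) => v x) (b.sum_repr (f k))
    simp only [WithLp.ofLp_sum, Finset.sum_apply, b.repr_apply_apply] at this
    simp only [mul_apply, of_apply]
    refine Eq.trans (b := f k x) rfl ?_
    rw [← this]
    exact Finset.sum_congr rfl fun r _ => by simp [mul_comm]
  · intro r c hc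
    exact InnerProductSpace.gramSchmidtOrthonormalBasis_inv_triangular _ f hc

end Frames

/-! ### Solutions have semistable flags -/

section Necessity

/-- An orthonormal basis of `S`, arranged as the columns of a matrix. -/
lemma exists_orthonormal_matrix {m : Type*} [Fintype m] [DecidableEq m] (S : Submodule ℝ (m → ℝ)) :
    ∃ (k : ℕ) (B : Matrix m (Fin k) ℝ), k = finrank ℝ S ∧ Bᵀ * B = 1 ∧ (∀ y, B *ᵥ y ∈ S) ∧
      ∀ x ∈ S, B *ᵥ (Bᵀ *ᵥ x) = x := by
  let S' : Submodule ℝ (EuclideanSpace ℝ m) := S.comap (WithLp.linearEquiv 2 ℝ (m → ℝ)).toLinearMap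
  have hdim : finrank ℝ S' = finrank ℝ S :=
    LinearEquiv.finrank_eq ((WithLp.linearEquiv 2 ℝ (m → ℝ)).ofSubmodule' S)
  let b := stdOrthonormalBasis ℝ S'
  refine ⟨finrank ℝ S', of fun x i => (b i : EuclideanSpace ℝ m) x, hdim, ?_, ?_, ?_⟩
  · ext i j
    have := orthonormal_iff_ite.1 b.orthonormal i j
    rw [Submodule.coe_inner, PiLp.inner_apply] at this
    simp only [mul_apply, transpose_apply, of_apply, one_apply, ← this]
    exact Finset.sum_congr rfl fun x _ => by simp [mul_comm]
  · intro y
    have : (of fun x i => (b i : EuclideanSpace ℝ m) x) *ᵥ y =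
        ∑ i, y i • (b i : EuclideanSpace ℝ m).ofLp := by
      funext x
      simp [mulVec, dotProduct, mul_comm]
    rw [this]
    exact Submodule.sum_mem _ fun i _ => Submodule.smul_mem _ _ (b i).2
  · intro x hx
    have := congrArg (fun v : S' => (v : EuclideanSpace ℝ m)) (b.sum_repr ⟨WithLp.toLp 2 x, hx⟩)
    funext z
    have h2 := congrArg (fun v : EuclideanSpace ℝ m => v z) this
    simp only [Submodule.coe_sum, WithLp.ofLp_sum, Finset.sum_apply, b.repr_apply_apply] at h2
    refine Eq.trans ?_ h2
    simp only [mulVec, dotProduct, of_apply, transpose_apply]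
    refine Finset.sum_congr rfl fun i _ => ?_
    rw [Submodule.coe_inner, PiLp.inner_apply]
    simp [mul_comm]

lemma trace_transpose_mul_self_nonneg {m k : Type*} [Fintype m] [Fintype k] (Z : Matrix m k ℝ) :
    0 ≤ (Zᵀ * Z).trace := by
  simp only [trace, diag_apply, mul_apply, transpose_apply]
  exact Finset.sum_nonneg fun _ _ => Finset.sum_nonneg fun _ _ => mul_self_nonneg _

/-- If `F` has orthonormal columns and `B * Bᵀ` fixes `S` pointwise, then `Fᵀ B Bᵀ F` fixes the
preimage of `S` under `F` pointwise. Its trace is therefore at least the dimension of this preimage,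
as the compression of a positive semidefinite matrix to the orthogonal complement has nonnegative
trace. -/
lemma finrank_comap_le_trace {n m k : Type*} [Fintype n] [Fintype m] [DecidableEq m] [Fintype k]
    [DecidableEq n] (S : Submodule ℝ (n → ℝ)) (F : Matrix n m ℝ) (hF : Fᵀ * F = 1)
    (B : Matrix n k ℝ) (hB : ∀ x ∈ S, B *ᵥ (Bᵀ *ᵥ x) = x) :
    (finrank ℝ (S.comap F.mulVecLin) : ℝ) ≤ ((Bᵀ * F)ᵀ * (Bᵀ * F)).trace := by
  obtain ⟨d, D, hd, hD, hmem, -⟩ := exists_orthonormal_matrix (S.comap F.mulVecLin)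
  have hY : (Bᵀ * F)ᵀ * (Bᵀ * F) * D = D := by
    refine Matrix.toLin'.injective (LinearMap.ext fun y => ?_)
    have h1 := hB _ (hmem y)
    have h2 := congrArg (Fᵀ *ᵥ ·) h1
    simp only [mulVecLin_apply, mulVec_mulVec] at h2
    simp only [toLin'_apply]
    rw [transpose_mul, transpose_transpose]
    simp only [Matrix.mul_assoc] at h2 ⊢
    rw [h2, ← Matrix.mul_assoc Fᵀ F, hF, Matrix.one_mul]
  set Y := (Bᵀ * F)ᵀ * (Bᵀ * F) with hYdef
  have hYs : Yᵀ = Y := by rw [hYdef, transpose_mul, transpose_transpose]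
  have hY2 : Dᵀ * Y = Dᵀ := by
    have := congrArg transpose hY
    rwa [transpose_mul, hYs] at this
  have hZ : (Bᵀ * F * (1 - D * Dᵀ))ᵀ * (Bᵀ * F * (1 - D * Dᵀ)) = Y - D * Dᵀ := by
    have e1 : (1 - D * Dᵀ)ᵀ = 1 - D * Dᵀ := by simp [transpose_mul]
    rw [transpose_mul, e1, Matrix.mul_assoc, ← Matrix.mul_assoc (Bᵀ * F)ᵀ, ← hYdef,
      Matrix.mul_sub Y, Matrix.mul_one, ← Matrix.mul_assoc Y, hY, Matrix.sub_mul, Matrix.one_mul,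
      Matrix.mul_sub, Matrix.mul_assoc D, hY2, Matrix.mul_assoc D, ← Matrix.mul_assoc Dᵀ D, hD,
      Matrix.one_mul, sub_self, sub_zero]
  have h := trace_transpose_mul_self_nonneg (Bᵀ * F * (1 - D * Dᵀ))
  rw [hZ, trace_sub, trace_mul_comm D, hD, trace_one, Fintype.card_fin, hd] at h
  linarith

/-- A solution of `∑ Q j diag(a j) Q jᵀ = ρ • 1` makes the column flags of the `Q j` semistable:
compress the equation to `S` and take traces. -/
theorem semistable_of_sum_eq {n : ℕ} {J : Type*} [Fintype J] (Q : J → Matrix (Fin n) (Fin n) ℝ)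
    (hQ : ∀ j, (Q j)ᵀ * Q j = 1) (a : J → Fin n → ℝ) (ha : ∀ j k, 0 ≤ step (a j) k) (ρ : ℝ)
    (h : ∑ j, Q j * diagonal (a j) * (Q j)ᵀ = ρ • 1) :
    Semistable (fun i : J × Fin n => (frame (Q i.1) i.2).mulVecLin)
      (fun i => step (a i.1) i.2) ρ := by
  intro S
  obtain ⟨d, B, hd, hB, -, hBS⟩ := exists_orthonormal_matrix S
  calc ∑ i : J × Fin n, step (a i.1) i.2 *
        (finrank ℝ (S.comap (frame (Q i.1) i.2).mulVecLin) : ℝ)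
      ≤ ∑ i : J × Fin n, step (a i.1) i.2 *
        ((Bᵀ * frame (Q i.1) i.2)ᵀ * (Bᵀ * frame (Q i.1) i.2)).trace :=
        Finset.sum_le_sum fun i _ => mul_le_mul_of_nonneg_left
          (finrank_comap_le_trace S _ (frame_orthonormal _ (hQ _) _) B hBS) (ha _ _)
    _ = (Bᵀ * (∑ j, Q j * diagonal (a j) * (Q j)ᵀ) * B).trace := by
        simp only [conj_diagonal_eq_sum, ← Fintype.sum_prod_type', Matrix.mul_sum, Matrix.sum_mul,
          trace_sum]
        refine Finset.sum_congr rfl fun i _ => ?_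
        rw [trace_mul_comm, transpose_mul, transpose_transpose, Matrix.mul_smul, Matrix.smul_mul,
          trace_smul, smul_eq_mul]
        simp only [Matrix.mul_assoc]
    _ = ρ * (finrank ℝ S : ℝ) := by
        rw [h, Matrix.mul_smul, Matrix.mul_one, Matrix.smul_mul, hB, trace_smul, trace_one,
          Fintype.card_fin, hd, smul_eq_mul]

end Necessity

/-! ### Semistable flags yield solutions -/

section Descent

variable {n : ℕ} {J : Type*} [Fintype J]

/-- The defect in the equation `∑ Q j diag(a j) Q jᵀ = ρ • 1`. -/
noncomputable def residual (a : J → Fin n → ℝ) (ρ : ℝ) (Q : J → Matrix (Fin n) (Fin n) ℝ) :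
    Matrix (Fin n) (Fin n) ℝ :=
  ∑ j, Q j * diagonal (a j) * (Q j)ᵀ - ρ • 1

lemma residual_isSymm (a : J → Fin n → ℝ) (ρ : ℝ) (Q : J → Matrix (Fin n) (Fin n) ℝ) :
    (residual a ρ Q).IsSymm := by
  rw [IsSymm, residual, transpose_sub, transpose_smul, transpose_one, transpose_sum]
  simp only [transpose_mul, transpose_transpose, diagonal_transpose, Matrix.mul_assoc]

lemma log_det_conj {m : Type*} [Fintype m] [DecidableEq m] (X T : Matrix m m ℝ) (hX : X.det ≠ 0)
    (hT : (Tᵀ * T).det ≠ 0) :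
    Real.log (Tᵀ * X * T).det = Real.log X.det + Real.log (Tᵀ * T).det := by
  rw [← Real.log_mul hX hT]
  simp only [det_mul]
  ring_nf

/-- A gradient step for the energy. With `P = hᵀ h`, let `Q j` be the orthogonal factor in the QR
decomposition of `h g j` and `G` the residual at `Q`. Replacing `P` by `hᵀ (1 - t G) h` lowers the
energy by at least `t / 2` times the squared Frobenius norm of `G`. -/
theorem energy_descent (g : J → Matrix (Fin n) (Fin n) ℝ) (hg : ∀ j, IsUnit (g j).det)
    (a : J → Fin n → ℝ) (ha : ∀ j k, 0 ≤ step (a j) k) (ρ : ℝ) (hρ : 0 ≤ ρ) (t B : ℝ)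
    (ht : 0 ≤ t) (hB0 : 0 ≤ B) (htB : t * B ≤ 1 / 2) (htρ : 2 * ρ * t ≤ 1 / 2)
    (hB : ∀ Q : J → Matrix (Fin n) (Fin n) ℝ, (∀ j, (Q j)ᵀ * Q j = 1) →
      (residual a ρ Q * residual a ρ Q).trace ≤ B ^ 2)
    (P : Matrix (Fin n) (Fin n) ℝ) (hP : P.PosDef) :
    ∃ Q : J → Matrix (Fin n) (Fin n) ℝ, (∀ j, (Q j)ᵀ * Q j = 1) ∧
      ∃ P' : Matrix (Fin n) (Fin n) ℝ, P'.PosDef ∧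
      energy (fun i : J × Fin n => frame (g i.1) i.2) (fun i => step (a i.1) i.2) ρ P' ≤
        energy (fun i : J × Fin n => frame (g i.1) i.2) (fun i => step (a i.1) i.2) ρ P -
          t / 2 * (residual a ρ Q * residual a ρ Q).trace := by
  obtain ⟨h, hh, rfl⟩ := exists_sqrt P hP
  choose Q R hQ hQR hR using fun j => exists_qr (h * g j)
  set G := residual a ρ Q with hG
  obtain ⟨hpd, hlog⟩ := posDef_one_sub_smul_and_log_det G (residual_isSymm a ρ Q) t B ht (hB Q hQ)
    hB0 htB
  refine ⟨Q, hQ, hᵀ * (1 - t • G) * h, posDef_transpose_mul_mul _ _ hpd hh, ?_⟩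
  have hdet : Real.log (hᵀ * (1 - t • G) * h).det =
      Real.log (1 - t • G).det + Real.log (hᵀ * h).det :=
    log_det_conj _ _ hpd.det_pos.ne' hP.det_pos.ne'
  have hterm : ∀ i : J × Fin n,
      Real.log ((frame (g i.1) i.2)ᵀ * (hᵀ * (1 - t • G) * h) * frame (g i.1) i.2).det ≤
      Real.log ((frame (g i.1) i.2)ᵀ * (hᵀ * h) * frame (g i.1) i.2).det -
        t * (G * (frame (Q i.1) i.2 * (frame (Q i.1) i.2)ᵀ)).trace := by
    rintro ⟨j, k⟩
    simp only
    set F := frame (Q j) k with hFdef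
    set T : Matrix {r : Fin n // r ≤ k} {r : Fin n // r ≤ k} ℝ :=
      (R j).submatrix Subtype.val Subtype.val with hT
    have hF : Fᵀ * F = 1 := frame_orthonormal _ (hQ j) k
    have hFT : h * frame (g j) k = F * T := by
      rw [← frame_mul, hQR j, frame_mul_upper _ _ (hR j)]
      rfl
    have e1 : ∀ X : Matrix (Fin n) (Fin n) ℝ,
        (frame (g j) k)ᵀ * (hᵀ * X * h) * frame (g j) k = Tᵀ * (Fᵀ * X * F) * T := by
      intro X
      have h1 : (frame (g j) k)ᵀ * (hᵀ * X * h) * frame (g j) k =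
          (h * frame (g j) k)ᵀ * X * (h * frame (g j) k) := by
        rw [transpose_mul]; simp only [Matrix.mul_assoc]
      rw [h1, hFT, transpose_mul]; simp only [Matrix.mul_assoc]
    have e2 : (frame (g j) k)ᵀ * (hᵀ * h) * frame (g j) k = Tᵀ * T := by
      have := e1 1
      rwa [Matrix.mul_one, Matrix.mul_one, hF, Matrix.mul_one] at this
    have hTT : (Tᵀ * T).PosDef := by
      rw [← e2, ← conjTranspose_eq_transpose_of_trivial (frame (g j) k)]
      exact hP.conjTranspose_mul_mul_same (frame_injective _ (hg j) k)
    have hX : (Fᵀ * (1 - t • G) * F).PosDef := by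
      rw [← conjTranspose_eq_transpose_of_trivial F]
      refine hpd.conjTranspose_mul_mul_same fun x y hxy => ?_
      have := congrArg (Fᵀ *ᵥ ·) hxy
      simpa [mulVec_mulVec, hF] using this
    rw [e1, e2, log_det_conj _ _ hX.det_pos.ne' hTT.det_pos.ne']
    have h3 := log_det_le _ hX
    have h4 : (Fᵀ * (1 - t • G) * F).trace =
        Fintype.card {r : Fin n // r ≤ k} - t * (G * (F * Fᵀ)).trace := by
      rw [Matrix.mul_sub, Matrix.mul_one, Matrix.sub_mul, hF, trace_sub, trace_one, Matrix.mul_smul,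
        Matrix.smul_mul, trace_smul, smul_eq_mul, Matrix.mul_assoc, trace_mul_comm Fᵀ,
        Matrix.mul_assoc]
    linarith
  have hsum : ∑ i : J × Fin n, step (a i.1) i.2 *
      (G * (frame (Q i.1) i.2 * (frame (Q i.1) i.2)ᵀ)).trace =
      (G * G).trace + ρ * G.trace := by
    have h1 : ∑ j, Q j * diagonal (a j) * (Q j)ᵀ = G + ρ • 1 := by rw [hG, residual]; abel
    have h2 : (G * ∑ j, Q j * diagonal (a j) * (Q j)ᵀ).trace = (G * G).trace + ρ * G.trace := by
      rw [h1, Matrix.mul_add, trace_add, Matrix.mul_smul, Matrix.mul_one, trace_smul, smul_eq_mul]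
    rw [← h2]
    simp only [conj_diagonal_eq_sum, ← Fintype.sum_prod_type', Matrix.mul_sum, trace_sum,
      Matrix.mul_smul, trace_smul, smul_eq_mul]
  have hG0 : 0 ≤ (G * G).trace := by
    have := trace_transpose_mul_self_nonneg G
    rwa [residual_isSymm a ρ Q] at this
  have hle := Finset.sum_le_sum fun (i : J × Fin n) (_ : i ∈ Finset.univ) =>
    mul_le_mul_of_nonneg_left (hterm i) (ha i.1 i.2)
  have hsplit : ∑ i : J × Fin n, step (a i.1) i.2 *
      (Real.log ((frame (g i.1) i.2)ᵀ * (hᵀ * h) * frame (g i.1) i.2).det -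
        t * (G * (frame (Q i.1) i.2 * (frame (Q i.1) i.2)ᵀ)).trace) =
      ∑ i : J × Fin n, step (a i.1) i.2 *
        Real.log ((frame (g i.1) i.2)ᵀ * (hᵀ * h) * frame (g i.1) i.2).det -
      t * ((G * G).trace + ρ * G.trace) := by
    rw [← hsum, Finset.mul_sum, ← Finset.sum_sub_distrib]
    exact Finset.sum_congr rfl fun i _ => by ring
  rw [hsplit] at hle
  simp only [energy]
  rw [hdet]
  have h5 := mul_le_mul_of_nonneg_left hlog hρ
  have h6 : 2 * ρ * t * (t * (G * G).trace) ≤ 1 / 2 * (t * (G * G).trace) :=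
    mul_le_mul_of_nonneg_right htρ (mul_nonneg ht hG0)
  linarith

/-- Semistability suffices for solvability. The residual has a minimal Frobenius norm on the compact
set of tuples of orthogonal matrices; were it positive, each gradient step would lower the energy by
a fixed amount, contradicting `energy_bddBelow`. -/
theorem exists_sum_eq (g : J → Matrix (Fin n) (Fin n) ℝ) (hg : ∀ j, IsUnit (g j).det)
    (a : J → Fin n → ℝ) (ha : ∀ j k, 0 ≤ step (a j) k) (ρ : ℝ) (hρ : 0 ≤ ρ)
    (htr : ∑ j, ∑ r, a j r = ρ * n)
    (hss : Semistable (fun i : J × Fin n => (frame (g i.1) i.2).mulVecLin)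
      (fun i => step (a i.1) i.2) ρ) :
    ∃ Q : J → Matrix (Fin n) (Fin n) ℝ, (∀ j, (Q j)ᵀ * Q j = 1) ∧
      ∑ j, Q j * diagonal (a j) * (Q j)ᵀ = ρ • 1 := by
  obtain ⟨C, hC⟩ := energy_bddBelow (fun i : J × Fin n => frame (g i.1) i.2)
    (fun i => frame_injective _ (hg _) _) (fun i => step (a i.1) i.2) (fun i => ha _ _) ρ hρ
    (by
      rw [Fintype.sum_prod_type, ← htr]
      exact Finset.sum_congr rfl fun j _ => sum_step_mul_card (a j)) hss
  let K : Set (J → Matrix (Fin n) (Fin n) ℝ) := Set.pi Set.univ fun _ => {Q | Qᵀ * Q = 1}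
  have hKmem : ∀ Q, Q ∈ K ↔ ∀ j, (Q j)ᵀ * Q j = 1 := by
    intro Q; simp [K]
  have hK : IsCompact K := isCompact_univ_pi fun _ => isCompact_orthogonal
  have hne : K.Nonempty := ⟨fun _ => 1, (hKmem _).2 fun j => by simp⟩
  let f : (J → Matrix (Fin n) (Fin n) ℝ) → ℝ := fun Q =>
    (residual a ρ Q * residual a ρ Q).trace
  have hf : Continuous f := by
    have : Continuous fun Q => residual a ρ Q := by
      unfold residual
      fun_prop
    exact (this.matrix_mul this).matrix_trace
  have hf0 : ∀ Q, 0 ≤ f Q := fun Q => by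
    have := trace_transpose_mul_self_nonneg (residual a ρ Q)
    rwa [residual_isSymm a ρ Q] at this
  obtain ⟨Q₀, hQ₀, hmin⟩ := hK.exists_isMinOn hne hf.continuousOn
  obtain ⟨Q₁, hQ₁, hmax⟩ := hK.exists_isMaxOn hne hf.continuousOn
  refine ⟨Q₀, (hKmem _).1 hQ₀, ?_⟩
  by_contra hcon
  have hδ : 0 < f Q₀ := by
    refine lt_of_le_of_ne (hf0 _) fun h0 => hcon ?_
    have h1 : residual a ρ Q₀ = 0 := by
      rw [← trace_conjTranspose_mul_self_eq_zero_iff, conjTranspose_eq_transpose_of_trivial,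
        residual_isSymm a ρ Q₀]
      exact h0.symm
    exact sub_eq_zero.1 h1
  -- The step length `t` keeps `1 - t • G` positive definite and absorbs the quadratic error.
  set B := √(f Q₁) with hBdef
  have hB0 : 0 ≤ B := Real.sqrt_nonneg _
  have hB2 : B ^ 2 = f Q₁ := Real.sq_sqrt (hf0 _)
  set t : ℝ := 1 / (2 * B + 4 * ρ + 2) with htdef
  have hden : 0 < 2 * B + 4 * ρ + 2 := by positivity
  have ht : 0 < t := by positivity
  have htm : t * (2 * B + 4 * ρ + 2) = 1 := by rw [htdef]; field_simp
  let E := energy (fun i : J × Fin n => frame (g i.1) i.2) (fun i => step (a i.1) i.2) ρ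
  let V : Set ℝ := E '' {P | P.PosDef}
  have hVne : V.Nonempty := ⟨_, 1, PosDef.one, rfl⟩
  have hVb : BddBelow V := ⟨C, by rintro _ ⟨P, hP, rfl⟩; exact hC P hP⟩
  obtain ⟨_, ⟨P, hP, rfl⟩, hlt⟩ := exists_lt_of_csInf_lt hVne
    (show sInf V < sInf V + t / 2 * f Q₀ from lt_add_of_pos_right _ (by positivity))
  obtain ⟨Q, hQ, P', hP', hle⟩ := energy_descent g hg a ha ρ hρ t B ht.le hB0
    (by nlinarith [mul_nonneg ht.le hρ]) (by nlinarith [mul_nonneg ht.le hB0])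
    (fun Q hQ => by rw [hB2]; exact hmax ((hKmem Q).2 hQ)) P hP
  have h1 : sInf V ≤ E P' := csInf_le hVb ⟨P', hP', rfl⟩
  have h2 : f Q₀ ≤ f Q := hmin ((hKmem Q).2 hQ)
  have h3 : t / 2 * f Q₀ ≤ t / 2 * f Q := mul_le_mul_of_nonneg_left h2 (by positivity)
  have h4 : E P' ≤ E P - t / 2 * f Q := hle
  linarith

end Descent

/-! ### Convex combinations of solutions -/

section Combination

variable {n : ℕ} {J : Type*} [Fintype J]

lemma finite_setOf_det_eq_zero (g d : Matrix (Fin n) (Fin n) ℝ) (hg : g.det ≠ 0) :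
    {s : ℝ | (g + s • d).det = 0}.Finite := by
  let p : Polynomial ℝ := (g.map Polynomial.C + (Polynomial.X : Polynomial ℝ) •
    d.map Polynomial.C).det
  have hp : ∀ s, p.eval s = (g + s • d).det := by
    intro s
    rw [← Polynomial.coe_evalRingHom, RingHom.map_det]
    congr 1
    ext x y
    simp
    ring
  have hp0 : p ≠ 0 := by
    intro h
    have := hp 0
    rw [h] at this
    simp at this
    exact hg this.symm
  refine (p.roots.toFinset.finite_toSet).subset fun s hs => ?_
  simp only [Finset.mem_coe, Multiset.mem_toFinset]
  exact (Polynomial.mem_roots hp0).2 (by rw [Polynomial.IsRoot, hp]; exact hs)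

lemma frame_pencil (g d : Matrix (Fin n) (Fin n) ℝ) (s : ℝ) (k : Fin n) :
    (frame (g + s • d) k).mulVecLin = (frame g k).mulVecLin + s • (frame d k).mulVecLin := by
  have : frame (g + s • d) k = frame g k + s • frame d k := rfl
  rw [this, mulVecLin_add]
  congr 1
  ext x y
  simp

lemma finite_setOf_not_semistable (g d : J → Matrix (Fin n) (Fin n) ℝ) (a : J → Fin n → ℝ)
    (ha : ∀ j k, 0 ≤ step (a j) k) (ρ : ℝ) (hρ : 0 ≤ ρ)
    (h : Semistable (fun i : J × Fin n => (frame (g i.1) i.2).mulVecLin)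
      (fun i => step (a i.1) i.2) ρ) :
    {s : ℝ | ¬ Semistable (fun i : J × Fin n => (frame (g i.1 + s • d i.1) i.2).mulVecLin)
      (fun i => step (a i.1) i.2) ρ}.Finite := by
  simp only [frame_pencil]
  exact Semistable.finite_setOf_not (fun i : J × Fin n => (frame (g i.1) i.2).mulVecLin)
    (fun i : J × Fin n => (frame (d i.1) i.2).mulVecLin) _ (fun i => ha _ _) ρ hρ h

/-- The convexity statement in symmetric form. On the line of tuples of matrices through `Q` and `Q'`
semistability for the weights of `a`, semistability for the weights of `a'`, and invertibility each
fail at only finitely many points. At any other point the flags are semistable for both weights,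
hence for their convex combination. -/
theorem exists_sum_eq_combo (a a' : J → Fin n → ℝ) (ha : ∀ j k, 0 ≤ step (a j) k)
    (ha' : ∀ j k, 0 ≤ step (a' j) k) (ρ : ℝ) (hρ : 0 ≤ ρ)
    (Q Q' : J → Matrix (Fin n) (Fin n) ℝ) (hQ : ∀ j, (Q j)ᵀ * Q j = 1)
    (hQ' : ∀ j, (Q' j)ᵀ * Q' j = 1)
    (h : ∑ j, Q j * diagonal (a j) * (Q j)ᵀ = ρ • 1)
    (h' : ∑ j, Q' j * diagonal (a' j) * (Q' j)ᵀ = ρ • 1)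
    (x y : ℝ) (hx : 0 ≤ x) (hy : 0 ≤ y) (hxy : x + y = 1) :
    ∃ U : J → Matrix (Fin n) (Fin n) ℝ, (∀ j, (U j)ᵀ * U j = 1) ∧
      ∑ j, U j * diagonal (fun r => x * a j r + y * a' j r) * (U j)ᵀ = ρ • 1 := by
  have htrace : ∀ (a : J → Fin n → ℝ) (Q : J → Matrix (Fin n) (Fin n) ℝ),
      (∀ j, (Q j)ᵀ * Q j = 1) → ∑ j, Q j * diagonal (a j) * (Q j)ᵀ = ρ • 1 →
      ∑ j, ∑ r, a j r = ρ * n := by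
    intro a Q hQ h
    have h1 := congrArg trace h
    rw [trace_sum, trace_smul, trace_one, Fintype.card_fin, smul_eq_mul] at h1
    rw [← h1]
    refine Finset.sum_congr rfl fun j _ => ?_
    rw [Matrix.mul_assoc, trace_mul_comm, Matrix.mul_assoc, hQ, Matrix.mul_one, trace_diagonal]
  have hdetQ : ∀ j, (Q j).det ≠ 0 := fun j h0 => by
    have := congrArg det (hQ j)
    simp [det_mul, h0] at this
  -- Both `Q` and `Q'` lie on the line `Q + s • (Q' - Q)`, at `s = 0` and `s = 1`.
  have f1 := finite_setOf_not_semistable Q (fun j => Q' j - Q j) a ha ρ hρ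
    (semistable_of_sum_eq Q hQ a ha ρ h)
  have f2 := finite_setOf_not_semistable Q' (fun j => Q j - Q' j) a' ha' ρ hρ
    (semistable_of_sum_eq Q' hQ' a' ha' ρ h')
  have f2' := f2.preimage (f := fun s : ℝ => 1 - s) (sub_right_injective.injOn)
  have f3 : (⋃ j, {s : ℝ | (Q j + s • (Q' j - Q j)).det = 0}).Finite :=
    Set.finite_iUnion fun j => finite_setOf_det_eq_zero _ _ (hdetQ j)
  obtain ⟨s, hs⟩ := ((f1.union f2').union f3).exists_notMem
  simp only [Set.mem_union, not_or, Set.mem_iUnion, not_exists, Set.mem_preimage,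
    Set.mem_ofPred_eq, not_not] at hs
  obtain ⟨⟨s1, s2⟩, s3⟩ := hs
  have hrev : ∀ j, Q' j + (1 - s) • (Q j - Q' j) = Q j + s • (Q' j - Q j) := fun j => by
    module
  simp only [hrev] at s2
  refine exists_sum_eq (fun j => Q j + s • (Q' j - Q j)) (fun j => isUnit_iff_ne_zero.2 (s3 j))
    (fun j r => x * a j r + y * a' j r) (fun j k => ?_) ρ hρ ?_ ?_
  · rw [step_combo]
    exact add_nonneg (mul_nonneg hx (ha j k)) (mul_nonneg hy (ha' j k))
  · simp only [Finset.sum_add_distrib, ← Finset.mul_sum, htrace a Q hQ h, htrace a' Q' hQ' h']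
    rw [← add_mul, hxy, one_mul]
  · intro S
    simp only [step_combo, add_mul, mul_assoc, Finset.sum_add_distrib, ← Finset.mul_sum]
    have h1 := mul_le_mul_of_nonneg_left (s1 S) hx
    have h2 := mul_le_mul_of_nonneg_left (s2 S) hy
    have h3 : ρ * (finrank ℝ S : ℝ) = x * (ρ * (finrank ℝ S : ℝ)) + y * (ρ * (finrank ℝ S : ℝ)) := by
      rw [← add_mul, hxy, one_mul]
    rw [h3]
    exact add_le_add h1 h2

end Combination

/-! ### Reduction of the eigenvalue problem to the symmetric equation -/

section Assembly

variable {n : ℕ}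

/-- The spectra of `A + τ`, `B + τ` and `τ - (A + B)`, each in weakly decreasing order, when `A`, `B`
and `A + B` have spectra `lam`, `mu` and `nu`. These three matrices sum to `3 * τ`, and are positive
semidefinite for large `τ`. -/
def shiftedTriple (τ : ℝ) (lam mu nu : Fin n → ℝ) : Fin 3 → Fin n → ℝ :=
  ![fun r => lam r + τ, fun r => mu r + τ, fun r => τ - nu r.rev]

lemma step_shiftedTriple_nonneg {τ : ℝ} {lam mu nu : Fin n → ℝ} (hlam : Antitone lam)
    (hmu : Antitone mu) (hnu : Antitone nu) (h1 : ∀ r, -τ ≤ lam r) (h2 : ∀ r, -τ ≤ mu r)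
    (h3 : ∀ r, nu r ≤ τ) (j : Fin 3) (k : Fin n) : 0 ≤ step (shiftedTriple τ lam mu nu j) k := by
  fin_cases j
  · exact step_nonneg (fun r s hrs => add_le_add_left (hlam hrs) τ)
      (fun r => by linarith [h1 r]) k
  · exact step_nonneg (fun r s hrs => add_le_add_left (hmu hrs) τ)
      (fun r => by linarith [h2 r]) k
  · exact step_nonneg (fun r s hrs => sub_le_sub_left (hnu (Fin.rev_le_rev.2 hrs)) τ)
      (fun r => sub_nonneg.2 (h3 _)) k

lemma conj_diagonal_add_const (Q : Matrix (Fin n) (Fin n) ℝ) (hQ : Qᵀ * Q = 1) (d : Fin n → ℝ)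
    (τ : ℝ) : Q * diagonal (fun r => d r + τ) * Qᵀ = Q * diagonal d * Qᵀ + τ • 1 := by
  have h : diagonal (fun r => d r + τ) = diagonal d + τ • (1 : Matrix (Fin n) (Fin n) ℝ) := by
    rw [smul_one_eq_diagonal, diagonal_add]
  rw [h, Matrix.mul_add, Matrix.add_mul, Matrix.mul_smul, Matrix.mul_one, Matrix.smul_mul,
    mul_eq_one_comm.1 hQ]

lemma conj_diagonal_const_sub (Q : Matrix (Fin n) (Fin n) ℝ) (hQ : Qᵀ * Q = 1) (d : Fin n → ℝ)
    (τ : ℝ) : Q * diagonal (fun r => τ - d r) * Qᵀ = τ • 1 - Q * diagonal d * Qᵀ := by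
  have h : diagonal (fun r => τ - d r) = τ • (1 : Matrix (Fin n) (Fin n) ℝ) - diagonal d := by
    rw [smul_one_eq_diagonal, diagonal_sub]
  rw [h, Matrix.mul_sub, Matrix.sub_mul, Matrix.mul_smul, Matrix.mul_one, Matrix.smul_mul,
    mul_eq_one_comm.1 hQ]

lemma sum_shiftedTriple_eq_iff (τ : ℝ) (lam mu nu : Fin n → ℝ)
    (Q : Fin 3 → Matrix (Fin n) (Fin n) ℝ) (hQ : ∀ j, (Q j)ᵀ * Q j = 1) :
    ∑ j, Q j * diagonal (shiftedTriple τ lam mu nu j) * (Q j)ᵀ = (3 * τ) • 1 ↔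
      Q 0 * diagonal lam * (Q 0)ᵀ + Q 1 * diagonal mu * (Q 1)ᵀ =
        Q 2 * diagonal (fun r => nu r.rev) * (Q 2)ᵀ := by
  have h0 : Q 0 * diagonal (shiftedTriple τ lam mu nu 0) * (Q 0)ᵀ = _ :=
    conj_diagonal_add_const (Q 0) (hQ 0) lam τ
  have h1 : Q 1 * diagonal (shiftedTriple τ lam mu nu 1) * (Q 1)ᵀ = _ :=
    conj_diagonal_add_const (Q 1) (hQ 1) mu τ
  have h2 : Q 2 * diagonal (shiftedTriple τ lam mu nu 2) * (Q 2)ᵀ = _ :=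
    conj_diagonal_const_sub (Q 2) (hQ 2) (fun r => nu r.rev) τ
  rw [Fin.sum_univ_three, h0, h1, h2, ← sub_eq_zero, ← sub_eq_zero (b := Q 2 * _ * _)]
  refine Eq.congr ?_ rfl
  module

lemma exists_sum_shiftedTriple_eq (τ : ℝ) {lam mu nu : Fin n → ℝ} (hlam : Antitone lam)
    (hmu : Antitone mu) (hnu : Antitone nu) (A B : Matrix (Fin n) (Fin n) ℝ) (hA : A.IsSymm)
    (hB : B.IsSymm) (hAl : A.charpoly = ∏ i : Fin n, (Polynomial.X - Polynomial.C (lam i)))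
    (hBm : B.charpoly = ∏ i : Fin n, (Polynomial.X - Polynomial.C (mu i)))
    (hABn : (A + B).charpoly = ∏ i : Fin n, (Polynomial.X - Polynomial.C (nu i))) :
    ∃ Q : Fin 3 → Matrix (Fin n) (Fin n) ℝ, (∀ j, (Q j)ᵀ * Q j = 1) ∧
      ∑ j, Q j * diagonal (shiftedTriple τ lam mu nu j) * (Q j)ᵀ = (3 * τ) • 1 := by
  obtain ⟨Q₀, h₀, e₀⟩ := exists_eq_conj_diagonal A hA lam hlam hAl
  obtain ⟨Q₁, h₁, e₁⟩ := exists_eq_conj_diagonal B hB mu hmu hBm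
  obtain ⟨Q₂, h₂, e₂⟩ := exists_eq_conj_diagonal (A + B) (hA.add hB) nu hnu hABn
  have h₂' : (Q₂.submatrix id Fin.rev)ᵀ * Q₂.submatrix id Fin.rev = 1 := by
    rw [transpose_submatrix, ← submatrix_mul _ _ _ _ _ Function.bijective_id, h₂]
    exact submatrix_one _ Fin.rev_injective
  have e₂' : Q₂.submatrix id Fin.rev * diagonal (fun r => nu r.rev) *
      (Q₂.submatrix id Fin.rev)ᵀ = A + B := by
    rw [e₂]
    ext x y
    rw [mul_apply, mul_apply]
    simp only [mul_diagonal, transpose_apply, submatrix_apply, id]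
    exact Equiv.sum_comp Fin.revPerm fun r => Q₂ x r * nu r * Q₂ y r
  have hQ : ∀ j, (![Q₀, Q₁, Q₂.submatrix id Fin.rev] j)ᵀ *
      ![Q₀, Q₁, Q₂.submatrix id Fin.rev] j = 1 := by
    intro j
    fin_cases j
    exacts [h₀, h₁, h₂']
  refine ⟨_, hQ, (sum_shiftedTriple_eq_iff τ lam mu nu _ hQ).2 ?_⟩
  exact (congrArg₂ (· + ·) e₀ e₁).symm.trans e₂'.symm

lemma isSymm_conj_diagonal (Q : Matrix (Fin n) (Fin n) ℝ) (d : Fin n → ℝ) :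
    (Q * diagonal d * Qᵀ).IsSymm := by
  rw [IsSymm]
  simp only [transpose_mul, transpose_transpose, diagonal_transpose, Matrix.mul_assoc]

end Assembly
end HornConvex

/-- For weakly decreasing `λ, μ ∈ ℝⁿ`, the set of weakly decreasing
`ν ∈ ℝⁿ` arising as the spectrum of `A + B` for real symmetric matrices `A, B` with
`spec A = λ` and `spec B = μ` is convex.  (Here `spec A = λ` is expressed by the
characteristic polynomial being `∏ (X − λᵢ)`.) -/
theorem stmt10 (n : ℕ) (hn : 1 ≤ n) (lam mu : Fin n → ℝ)
    (hlam : Antitone lam) (hmu : Antitone mu) :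
    Convex ℝ {nu : Fin n → ℝ | Antitone nu ∧
      ∃ A B : Matrix (Fin n) (Fin n) ℝ, A.IsSymm ∧ B.IsSymm ∧
        A.charpoly = ∏ i : Fin n, (Polynomial.X - Polynomial.C (lam i)) ∧
        B.charpoly = ∏ i : Fin n, (Polynomial.X - Polynomial.C (mu i)) ∧
        (A + B).charpoly = ∏ i : Fin n, (Polynomial.X - Polynomial.C (nu i))} := by
  open HornConvex Matrix in
  rintro nu ⟨hnu, A, B, hA, hB, hAl, hBm, hABn⟩ nu' ⟨hnu', A', B', hA', hB', hAl', hBm', hABn'⟩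
    x y hx hy hxy
  have habs : ∀ (f : Fin n → ℝ) r, |f r| ≤ ∑ s, |f s| := fun f r =>
    Finset.single_le_sum (f := fun s => |f s|) (fun s _ => abs_nonneg _) (Finset.mem_univ r)
  have habs0 : ∀ f : Fin n → ℝ, 0 ≤ ∑ s, |f s| := fun f =>
    Finset.sum_nonneg fun s _ => abs_nonneg _
  -- A shift large enough for all the shifted spectra to be nonnegative.
  obtain ⟨τ, hτ⟩ : ∃ τ, τ = ∑ s, |lam s| + ∑ s, |mu s| + ∑ s, |nu s| + ∑ s, |nu' s| := ⟨_, rfl⟩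
  have b1 : ∀ r, -τ ≤ lam r := fun r => by
    linarith [neg_abs_le (lam r), habs lam r, habs0 mu, habs0 nu, habs0 nu']
  have b2 : ∀ r, -τ ≤ mu r := fun r => by
    linarith [neg_abs_le (mu r), habs mu r, habs0 lam, habs0 nu, habs0 nu']
  have b3 : ∀ r, nu r ≤ τ := fun r => by
    linarith [le_abs_self (nu r), habs nu r, habs0 lam, habs0 mu, habs0 nu']
  have b4 : ∀ r, nu' r ≤ τ := fun r => by
    linarith [le_abs_self (nu' r), habs nu' r, habs0 lam, habs0 mu, habs0 nu]
  have hτ0 : 0 ≤ 3 * τ := by linarith [habs0 lam, habs0 mu, habs0 nu, habs0 nu']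
  obtain ⟨Q, hQ, hsum⟩ := exists_sum_shiftedTriple_eq τ hlam hmu hnu A B hA hB hAl hBm hABn
  obtain ⟨Q', hQ', hsum'⟩ := exists_sum_shiftedTriple_eq τ hlam hmu hnu' A' B' hA' hB' hAl' hBm'
    hABn'
  obtain ⟨U, hU, hUsum⟩ := exists_sum_eq_combo _ _
    (step_shiftedTriple_nonneg hlam hmu hnu b1 b2 b3)
    (step_shiftedTriple_nonneg hlam hmu hnu' b1 b2 b4) (3 * τ) hτ0 Q Q' hQ hQ' hsum hsum'
    x y hx hy hxy
  have hcombo : (fun j r => x * shiftedTriple τ lam mu nu j r + y * shiftedTriple τ lam mu nu' j r) =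
      shiftedTriple τ lam mu (x • nu + y • nu') := by
    obtain rfl : y = 1 - x := by linarith
    funext j r
    fin_cases j <;> simp [shiftedTriple] <;> ring
  have hUsum2 : ∑ j, U j * diagonal (shiftedTriple τ lam mu (x • nu + y • nu') j) * (U j)ᵀ =
      (3 * τ) • 1 := by
    rw [← hcombo]; exact hUsum
  rw [sum_shiftedTriple_eq_iff τ lam mu _ U hU] at hUsum2
  refine ⟨fun r s hrs => ?_, U 0 * diagonal lam * (U 0)ᵀ, U 1 * diagonal mu * (U 1)ᵀ,
    isSymm_conj_diagonal _ _, isSymm_conj_diagonal _ _, charpoly_conj_diagonal _ (hU 0) _,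
    charpoly_conj_diagonal _ (hU 1) _, ?_⟩
  · exact add_le_add (mul_le_mul_of_nonneg_left (hnu hrs) hx)
      (mul_le_mul_of_nonneg_left (hnu' hrs) hy)
  · rw [hUsum2, charpoly_conj_diagonal _ (hU 2)]
    exact Equiv.prod_comp Fin.revPerm fun r =>
      Polynomial.X - Polynomial.C ((x • nu + y • nu') r)
end

section
/- Let n ≥ 1 and let λ ∈ ℝⁿ be a weakly decreasing n-tuple. Then { (B₁₁, B₂₂, …, B_nn) ∈ ℝⁿ : B is a real symmetric n×n matrix with spec(B) = λ } is equal to the convex hull in ℝⁿ of the set { (λ_{π(1)}, …, λ_{π(n)}) : π a permutation of {1, …, n} }. -/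
/-!
Schur–Horn for real symmetric matrices.

Diagonals lie in the hull (Schur): write `B = U diag(μ) Uᵀ` with `U` orthogonal and `μ` a
rearrangement of `λ`. Then the diagonal of `B` is `M μ` with `M i j = (U i j)²` doubly stochastic,
and Birkhoff's theorem makes it a convex combination of permutations of `λ` (`diag_mem_hull`).

Hull points are diagonals (Horn): the set `S` of diagonals is closed under transfers, that is,
replacing two entries `a ≥ b` by `x` and `a + b - x` with `b ≤ x ≤ a`. This holds because a
rotation of the coordinate plane `(i, j)` moves the `(i, i)` entry continuously from `B i i`
(angle `0`) to `B j j` (angle `π / 2`), whatever the off-diagonal entries are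
(`diag_set_closed_rotation`). A decreasing vector `d` whose partial sums are dominated by those of
`e`, with equal total, is reached from `e` by finitely many transfers, each of which makes one more
coordinate agree (`mem_of_transfer_closed`). A point of the hull, sorted decreasingly, is dominated
by `λ` in this sense (`mem_hull_bounds`), and `λ ∈ S` as the diagonal of `diag(λ)`; conjugation by
a permutation matrix undoes the sorting.
-/

open Matrix in
/-- The set of diagonals of symmetric matrices with a given characteristic polynomial is closed
under transfers between two coordinates. -/
theorem diag_set_closed_rotation {n : ℕ} (B : Matrix (Fin n) (Fin n) ℝ) (hB : B.IsSymm)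
    {i j : Fin n} (hij : i ≠ j) {x : ℝ} (h1 : B j j ≤ x) (h2 : x ≤ B i i) :
    ∃ B' : Matrix (Fin n) (Fin n) ℝ, B'.IsSymm ∧ B'.charpoly = B.charpoly ∧
      (fun k => B' k k) =
        Function.update (Function.update (fun k => B k k) i x) j (B i i + B j j - x) := by
  have hji : B j i = B i j := hB.apply i j
  obtain ⟨θ, -, hθ⟩ : ∃ θ ∈ Set.Icc 0 (Real.pi / 2),
      Real.cos θ ^ 2 * B i i + Real.sin θ ^ 2 * B j j
        + 2 * Real.cos θ * Real.sin θ * B i j = x := by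
    have hc : ContinuousOn (fun θ : ℝ => Real.cos θ ^ 2 * B i i + Real.sin θ ^ 2 * B j j
        + 2 * Real.cos θ * Real.sin θ * B i j) (Set.Icc 0 (Real.pi / 2)) := by fun_prop
    apply intermediate_value_Icc' (by positivity) hc
    simp [h1, h2]
  have hcs := Real.sin_sq_add_cos_sq θ
  generalize Real.cos θ = c at *
  generalize Real.sin θ = s at *
  -- The rows of the rotation by `θ` in the plane spanned by the `i`-th and `j`-th basis vectors.
  let r : Fin n → Fin n → ℝ := fun k =>
    if k = i then Pi.single i c + Pi.single j s
    else if k = j then Pi.single i (-s) + Pi.single j c else Pi.single k 1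
  let Q : Matrix (Fin n) (Fin n) ℝ := Matrix.of r
  have ri : r i = Pi.single i c + Pi.single j s := by simp [r]
  have rj : r j = Pi.single i (-s) + Pi.single j c := by simp [r, hij.symm]
  have ro : ∀ k, k ≠ i → k ≠ j → r k = Pi.single k 1 := fun k h1 h2 => by simp [r, h1, h2]
  have hQ : Q * Qᵀ = 1 := by
    ext k l
    have : (Q * Qᵀ) k l = r k ⬝ᵥ r l := rfl
    rw [this]
    have key : ∀ m, m = i ∨ m = j ∨ (m ≠ i ∧ m ≠ j) := fun m => by tauto
    rcases key k with rfl | rfl | ⟨hki, hkj⟩ <;> rcases key l with rfl | rfl | ⟨hli, hlj⟩ <;>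
      simp [Pi.single_apply, Matrix.one_apply, *] <;> grind
  refine ⟨Q * B * Qᵀ, ?_, ?_, ?_⟩
  · simp [Matrix.IsSymm, Matrix.transpose_mul, hB.eq, Matrix.mul_assoc]
  · rw [Matrix.charpoly_mul_comm, ← Matrix.mul_assoc, mul_eq_one_comm.mp hQ, Matrix.one_mul]
  · funext k
    have : (Q * B * Qᵀ) k k = r k ⬝ᵥ (B *ᵥ r k) := by
      rw [Matrix.dotProduct_mulVec]; rfl
    rw [this]
    simp only [r]
    by_cases hkj : k = j
    · subst hkj
      simp [hij.symm, Matrix.mulVec_add, Matrix.mulVec_single, hji]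
      grind
    · by_cases hki : k = i
      · subst hki
        simp [hij, Matrix.mulVec_add, Matrix.mulVec_single, hji]
        grind
      · simp [hkj, hki]

/-- A transfer-closed set `S` containing `e` contains every decreasing `d` majorized by `e`.
The induction is on a bound `N` for the number of coordinates where `e` and `d` differ; `e` itself
need not be decreasing. -/
theorem mem_of_transfer_closed {n : ℕ} (S : Set (Fin n → ℝ))
    (hS : ∀ e ∈ S, ∀ i j : Fin n, i ≠ j → ∀ x : ℝ, e j ≤ x → x ≤ e i →
      Function.update (Function.update e i x) j (e i + e j - x) ∈ S)
    (d : Fin n → ℝ) (hd : Antitone d) (N : ℕ) : ∀ e ∈ S,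
    (Finset.univ.filter fun i => e i ≠ d i).card ≤ N →
    (∀ k, ∑ i ∈ Finset.Iic k, d i ≤ ∑ i ∈ Finset.Iic k, e i) →
    ∑ i, d i = ∑ i, e i → d ∈ S := by
  induction N with
  | zero =>
    intro e he hN _ _
    have : e = d := by
      funext i
      by_contra h
      have : i ∈ (Finset.univ.filter fun i => e i ≠ d i) := by simpa using h
      simp_all
    exact this ▸ he
  | succ N ih =>
    intro e he hN hle hsum
    by_cases hed : e = d
    · exact hed ▸ he
    have hex : ∃ k, e k < d k := by
      by_contra! h
      apply hed
      funext i
      exact ((Finset.sum_eq_sum_iff_of_le (fun i _ => h i)).1 hsum i (Finset.mem_univ i)).symm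
    -- Taking `k` to be the first deficient coordinate keeps the partial sums before `k` dominated
    -- termwise after the transfer, for any choice of `j < k` with a surplus.
    obtain ⟨k, hk, hmin⟩ : ∃ k, e k < d k ∧ ∀ i < k, d i ≤ e i := by
      obtain ⟨k, hk, hm⟩ := WellFounded.has_min (wellFounded_lt (α := Fin n)) {k | e k < d k} hex
      exact ⟨k, hk, fun i hi => not_lt.1 fun h => hm i h hi⟩
    obtain ⟨j, hjk, hj⟩ : ∃ j < k, d j < e j := by
      by_contra! h
      refine absurd (hle k) (not_le.2 (Finset.sum_lt_sum (fun i hi => ?_) ⟨k, by simp, hk⟩))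
      rcases (Finset.mem_Iic.1 hi).lt_or_eq with h' | h'
      · exact h i h'
      · exact h' ▸ hk.le
    have hdjk := hd hjk.le
    -- This amount makes coordinate `j` or `k` equal to its target; `d k ≤ d j` makes it admissible.
    set δ := min (e j - d j) (d k - e k) with hδ
    have hδ1 : δ ≤ e j - d j := min_le_left _ _
    have hδ2 : δ ≤ d k - e k := min_le_right _ _
    have hδ0 : 0 < δ := lt_min (by linarith) (by linarith)
    have hmem := hS e he j k hjk.ne (e j - δ) (by linarith) (by linarith)
    set e' := Function.update (Function.update e j (e j - δ)) k (e j + e k - (e j - δ)) with he'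
    have ek : e' k = e k + δ := by simp [e']
    have ej : e' j = e j - δ := by simp [e', hjk.ne]
    have eo : ∀ i, i ≠ j → i ≠ k → e' i = e i := fun i h1 h2 => by simp [e', h1, h2]
    have hsame : ∀ s : Finset (Fin n), j ∈ s → k ∈ s → ∑ i ∈ s, e' i = ∑ i ∈ s, e i := by
      intro s hjs hks
      have hks' : k ∈ s.erase j := Finset.mem_erase.2 ⟨hjk.ne', hks⟩
      rw [← Finset.add_sum_erase _ _ hjs, ← Finset.add_sum_erase _ _ hks',
        ← Finset.add_sum_erase _ e hjs, ← Finset.add_sum_erase _ e hks', ek, ej,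
        Finset.sum_congr rfl fun i hi => eo i (by grind) (by grind)]
      ring
    refine ih e' hmem ?_ ?_ ?_
    · refine Nat.le_of_lt_succ (lt_of_lt_of_le (Finset.card_lt_card ?_) hN)
      rw [Finset.ssubset_iff_of_subset]
      · rcases min_choice (e j - d j) (d k - e k) with h | h
        · exact ⟨j, by simpa using hj.ne', by simp [ej, hδ, h]⟩
        · exact ⟨k, by simpa using hk.ne, by simp [ek, hδ, h]⟩
      · intro i hi
        have := hj.ne'
        have := hk.ne
        grind
    · intro m
      rcases lt_or_ge m k with h | h
      · refine Finset.sum_le_sum fun i hi => ?_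
        have hik : i < k := (Finset.mem_Iic.1 hi).trans_lt h
        by_cases hij : i = j
        · subst hij; linarith
        · rw [eo i hij hik.ne]; exact hmin i hik
      · rw [hsame _ (by simpa using hjk.le.trans h) (by simpa using h)]
        exact hle m
    · rw [hsame _ (by simp) (by simp)]; exact hsum

theorem sum_comp_perm_le {n : ℕ} (lam : Fin n → ℝ) (hlam : Antitone lam)
    (π : Equiv.Perm (Fin n)) (k : Fin n) :
    ∑ i ∈ Finset.Iic k, lam (π i) ≤ ∑ i ∈ Finset.Iic k, lam i := by
  have hm : Monovary lam (fun i => if i ≤ k then (1 : ℝ) else 0) := by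
    refine Antitone.monovary hlam fun a b hab => ?_
    grind
  have := hm.sum_comp_perm_mul_le_sum_mul (σ := π)
  simpa [← Finset.sum_filter, Finset.filter_ge_eq_Iic] using this

/-- Every rearrangement of a point of the permutohedron of `lam` is majorized by `lam`: the
conditions are affine in `d`, so it suffices to check them on the vertices. -/
theorem mem_hull_bounds {n : ℕ} (lam : Fin n → ℝ) (hlam : Antitone lam) {d : Fin n → ℝ}
    (hd : d ∈ convexHull ℝ {d : Fin n → ℝ | ∃ π : Equiv.Perm (Fin n), d = lam ∘ π})
    (σ : Equiv.Perm (Fin n)) :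
    (∀ k, ∑ i ∈ Finset.Iic k, d (σ i) ≤ ∑ i ∈ Finset.Iic k, lam i) ∧
      ∑ i, d (σ i) = ∑ i, lam i := by
  have hsub : convexHull ℝ {d : Fin n → ℝ | ∃ π : Equiv.Perm (Fin n), d = lam ∘ π} ⊆
      {d | (∀ k, ∑ i ∈ Finset.Iic k, d (σ i) ≤ ∑ i ∈ Finset.Iic k, lam i) ∧
      ∑ i, d (σ i) = ∑ i, lam i} := by
    refine convexHull_min ?_ ?_
    · rintro _ ⟨π, rfl⟩
      exact ⟨fun k => sum_comp_perm_le lam hlam (σ.trans π) k,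
        Equiv.sum_comp (σ.trans π) lam⟩
    · rintro x ⟨hx1, hx2⟩ y ⟨hy1, hy2⟩ a b ha hb hab
      simp only [Set.mem_ofPred_eq, Pi.add_apply, Pi.smul_apply, smul_eq_mul,
        Finset.sum_add_distrib, ← Finset.mul_sum, hx2, hy2]
      refine ⟨fun k => ?_, by rw [← add_mul, hab, one_mul]⟩
      calc _ ≤ a * (∑ i ∈ Finset.Iic k, lam i) + b * (∑ i ∈ Finset.Iic k, lam i) :=
            add_le_add (mul_le_mul_of_nonneg_left (hx1 k) ha)
              (mul_le_mul_of_nonneg_left (hy1 k) hb)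
        _ = _ := by rw [← add_mul, hab, one_mul]
  exact hsub hd

theorem exists_perm_of_map_eq {n : ℕ} (f g : Fin n → ℝ)
    (h : Multiset.map f Finset.univ.val = Multiset.map g Finset.univ.val) :
    ∃ σ : Equiv.Perm (Fin n), f = g ∘ σ := by
  have hp : (List.ofFn f).Perm (List.ofFn g) := by
    simpa [Fin.univ_def, List.map_ofFn, List.ofFn_eq_map, ← Multiset.coe_eq_coe] using h
  have hs : List.ofFn (f ∘ Tuple.sort f) = List.ofFn (g ∘ Tuple.sort g) := by
    refine List.Perm.eq_of_sortedLE (Tuple.monotone_sort f).sortedLE_ofFn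
      (Tuple.monotone_sort g).sortedLE_ofFn ?_
    exact ((Equiv.Perm.ofFn_comp_perm _ f).trans hp).trans (Equiv.Perm.ofFn_comp_perm _ g).symm
  have hs' := List.ofFn_injective hs
  refine ⟨(Tuple.sort f).symm.trans (Tuple.sort g), funext fun i => ?_⟩
  simpa using congrFun hs' ((Tuple.sort f).symm i)

theorem mem_hull_of_doublyStochastic {n : ℕ} (lam : Fin n → ℝ) {M : Matrix (Fin n) (Fin n) ℝ}
    (hM : M ∈ doublyStochastic ℝ (Fin n)) (ρ : Equiv.Perm (Fin n)) :
    M.mulVec (lam ∘ ρ) ∈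
      convexHull ℝ {d : Fin n → ℝ | ∃ π : Equiv.Perm (Fin n), d = lam ∘ π} := by
  obtain ⟨w, hw0, hw1, rfl⟩ := exists_eq_sum_perm_of_mem_doublyStochastic hM
  rw [Matrix.sum_mulVec]
  simp only [Matrix.smul_mulVec, Matrix.permMatrix_mulVec]
  refine (convex_convexHull ℝ _).sum_mem (fun σ _ => hw0 σ) hw1 fun σ _ => subset_convexHull ℝ _ ?_
  exact ⟨σ.trans ρ, rfl⟩

theorem diag_mem_hull {n : ℕ} (lam : Fin n → ℝ) (B : Matrix (Fin n) (Fin n) ℝ) (hB : B.IsSymm)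
    (hc : B.charpoly = ∏ i : Fin n, (Polynomial.X - Polynomial.C (lam i))) :
    (fun i => B i i) ∈
      convexHull ℝ {d : Fin n → ℝ | ∃ π : Equiv.Perm (Fin n), d = lam ∘ π} := by
  have hH : B.IsHermitian := by
    rwa [Matrix.IsHermitian, Matrix.conjTranspose_eq_transpose_of_trivial]
  obtain ⟨ρ, hρ⟩ : ∃ ρ : Equiv.Perm (Fin n), hH.eigenvalues = lam ∘ ρ := by
    apply exists_perm_of_map_eq
    have h := hH.roots_charpoly_eq_eigenvalues
    have hr : (∏ i : Fin n, (Polynomial.X - Polynomial.C (lam i))).roots =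
        Multiset.map lam Finset.univ.val := by
      rw [← Polynomial.roots_multiset_prod_X_sub_C (Multiset.map lam Finset.univ.val),
        Multiset.map_map]
      rfl
    rw [hc, hr] at h
    exact h.symm
  let U : Matrix (Fin n) (Fin n) ℝ := hH.eigenvectorUnitary
  have hU1 : U * U.transpose = 1 := by
    have := Unitary.coe_mul_star_self hH.eigenvectorUnitary
    rwa [Unitary.coe_star, Matrix.star_eq_conjTranspose,
      Matrix.conjTranspose_eq_transpose_of_trivial] at this
  have hU2 : U.transpose * U = 1 := mul_eq_one_comm.mp hU1
  have hM : (Matrix.of fun i j => U i j ^ 2) ∈ doublyStochastic ℝ (Fin n) := by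
    refine mem_doublyStochastic_iff_sum.2 ⟨fun i j => sq_nonneg _, fun i => ?_, fun j => ?_⟩
    · simpa [Matrix.mul_apply, sq] using congrFun (congrFun hU1 i) i
    · simpa [Matrix.mul_apply, sq] using congrFun (congrFun hU2 j) j
  convert mem_hull_of_doublyStochastic lam hM ρ using 1
  have hs : B = U * Matrix.diagonal hH.eigenvalues * U.transpose := by
    conv_lhs => rw [hH.spectral_theorem, Unitary.conjStarAlgAut_apply]
    rw [Matrix.star_eq_conjTranspose, Matrix.conjTranspose_eq_transpose_of_trivial]
    rfl
  funext i
  rw [← hρ]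
  conv_lhs => rw [hs]
  rw [Matrix.mul_apply]
  simp only [Matrix.mul_diagonal, Matrix.transpose_apply, Matrix.mulVec, dotProduct, Matrix.of_apply]
  exact Finset.sum_congr rfl fun j _ => by ring

/-- Kostant/Schur–Horn for `(SU(n), SO(n))`.  For a weakly decreasing
`λ ∈ ℝⁿ`, the set of diagonals of real symmetric matrices with spectrum `λ` equals the convex
hull of the orbit of `λ` under permutations of coordinates.  (Here `spec B = λ` is expressed
by the characteristic polynomial being `∏ (X − λᵢ)`.) -/
theorem stmt13 (n : ℕ) (hn : 1 ≤ n) (lam : Fin n → ℝ) (hlam : Antitone lam) :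
    {d : Fin n → ℝ | ∃ B : Matrix (Fin n) (Fin n) ℝ, B.IsSymm ∧
        B.charpoly = ∏ i : Fin n, (Polynomial.X - Polynomial.C (lam i)) ∧
        d = fun i => B i i}
      = convexHull ℝ {d : Fin n → ℝ | ∃ π : Equiv.Perm (Fin n), d = lam ∘ π} := by
  apply Set.Subset.antisymm
  · rintro _ ⟨B, hB, hc, rfl⟩
    exact diag_mem_hull lam B hB hc
  · intro d hd
    obtain ⟨σ, hσ⟩ : ∃ σ : Equiv.Perm (Fin n), Antitone (d ∘ σ) :=
      ⟨Tuple.sort (-d), fun a b hab => neg_le_neg_iff.1 (Tuple.monotone_sort (-d) hab)⟩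
    obtain ⟨hle, hsum⟩ := mem_hull_bounds lam hlam hd σ
    obtain ⟨B, hB, hc, hdB⟩ := mem_of_transfer_closed
      {d : Fin n → ℝ | ∃ B : Matrix (Fin n) (Fin n) ℝ, B.IsSymm ∧
        B.charpoly = ∏ i : Fin n, (Polynomial.X - Polynomial.C (lam i)) ∧
        d = fun i => B i i}
      (by
        rintro _ ⟨B, hB, hc, rfl⟩ i j hij x h1 h2
        obtain ⟨B', hB', hc', hd'⟩ := diag_set_closed_rotation B hB hij h1 h2
        exact ⟨B', hB', hc'.trans hc, hd'.symm⟩)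
      (d ∘ σ) hσ _ lam
      ⟨Matrix.diagonal lam, Matrix.isSymm_diagonal lam, Matrix.charpoly_diagonal lam, by simp⟩
      le_rfl hle hsum
    refine ⟨Matrix.reindex σ σ B, hB.submatrix _, by rw [Matrix.charpoly_reindex, hc], ?_⟩
    funext i
    simpa using congrFun hdB (σ.symm i)
end
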